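/- arXiv:2509.13264 — 2 statements merged into one kernel-verified Lean document; each statement's English description precedes it below -/
import Mathlib

section
/- Let p be an odd prime and let λ be a self-conjugate partition. Then there exists an integer d ≥ 0 such that 𝔠(λ) = 𝔠(λ_(p)) + 𝔠(λ^[p]) − 2d, where λ_(p) is the p-core and λ^[p] the p-cocore of λ; in particular 𝔠(λ) ≡ 𝔠(λ_(p)) + 𝔠(λ^[p]) (mod 2). -/
open scoped BigOperators

/-- Removing a rim `p`-hook: `m ⊆ l`, the skew shape `l \ m` has `p` cells, and its cells
occupy `p` consecutive diagonals (contents `j − i`), one cell on each; this characterizes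
rim hooks (border strips) among skew shapes. -/
def IsRimHookRemoval (p : ℕ) (l m : YoungDiagram) : Prop :=
  m.cells ⊆ l.cells ∧ (l.cells \ m.cells).card = p ∧
  ∃ d0 : ℤ, (l.cells \ m.cells).image (fun c => (c.2 : ℤ) - (c.1 : ℤ)) =
    (Finset.range p).image (fun k : ℕ => d0 + (k : ℤ))

/-- A `p`-core: a partition admitting no rim `p`-hook removal. -/
def IsPCore (p : ℕ) (κ : YoungDiagram) : Prop := ∀ m, ¬ IsRimHookRemoval p κ m

/-- `κ` is the `p`-core of `l`. -/
def IsPCoreOf (p : ℕ) (l κ : YoungDiagram) : Prop :=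
  Relation.ReflTransGen (IsRimHookRemoval p) l κ ∧ IsPCore p κ

/-- `l` has empty `p`-core. -/
def HasEmptyPCore (p : ℕ) (l : YoungDiagram) : Prop :=
  Relation.ReflTransGen (IsRimHookRemoval p) l ⊥

/-- The β-set of first-column hook lengths of `l` using `N` rows. -/
def betaSet (l : YoungDiagram) (N : ℕ) : Finset ℕ :=
  (Finset.range N).image fun i => l.rowLen i + (N - 1 - i)

/-- The runner `r` of the `p`-abacus determined by a β-set `B`. -/
def runnerSet (p r : ℕ) (B : Finset ℕ) : Finset ℕ :=
  (B.filter fun x => x % p = r).image fun x => x / p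

/-- Padding a β-set: `S ↦ {x + d : x ∈ S} ∪ {0, …, d − 1}`; two β-sets represent the same
partition iff they agree after padding. -/
def padBeta (S : Finset ℕ) (d : ℕ) : Finset ℕ := S.image (· + d) ∪ Finset.range d

/-- `l` and `m` have the same `p`-quotient: for some common β-set size `N` divisible by `p`
(large enough for both), each runner of the `p`-abacus of `l` represents the same partition
as the corresponding runner for `m`. -/
def HasSamePQuotient (p : ℕ) (l m : YoungDiagram) : Prop :=
  ∃ N : ℕ, l.colLen 0 ≤ N ∧ m.colLen 0 ≤ N ∧ p ∣ N ∧
    ∀ r < p, ∃ d e2 : ℕ,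
      padBeta (runnerSet p r (betaSet l N)) d = padBeta (runnerSet p r (betaSet m N)) e2

/-- `m` is the `p`-cocore of `l`: the unique partition with empty `p`-core and the same
`p`-quotient as `l`. -/
def IsPCocoreOf (p : ℕ) (l m : YoungDiagram) : Prop :=
  HasEmptyPCore p m ∧ HasSamePQuotient p l m

/-- The Durfee number `𝔠(λ)`: the number of diagonal boxes of `λ`. -/
def durfee (l : YoungDiagram) : ℕ := (l.cells.filter fun c => c.1 = c.2).card

/-!
Display a partition as its Maya diagram, a set of beads on the integer line. Its Durfee number is
the number of nonnegative beads, conjugation reflects the line in `-1/2` and exchanges beads with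
gaps, and removing a rim `p`-hook moves a bead `p` places to the left into a gap, that is, one place
on its runner modulo `p`. Such moves preserve the charge of each runner: nonnegative beads minus
negative gaps. In the core every runner is pushed completely to the left, so a runner of charge `c`
has `max c 0` nonnegative beads; the cocore arises from `λ` by translating every runner to charge
`0`.

Hence `𝔠(λ_(p)) + 𝔠(λ^[p]) - 𝔠(λ)` is a sum over the runners of `λ` of a quantity, the excess, that
is nonnegative, invariant under reflection, and zero on runners of charge `0`. If `λ` is
self-conjugate, reflection pairs the runners `r` and `p - 1 - r`, and a runner paired with itself
has charge `0`, so the sum is even.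
-/

/-- A Maya diagram: a set of beads on the integer line containing all sufficiently negative
integers and no sufficiently large ones. -/
structure IsMaya (S : Set ℤ) : Prop where
  bddAbove : BddAbove S
  bddBelow_compl : BddBelow Sᶜ

/-- The number of beads of `S` at positions `≥ c` (junk value `0` if there are infinitely many). -/
noncomputable def beadsFrom (S : Set ℤ) (c : ℤ) : ℕ := (S ∩ Set.Ici c).ncard

/-- The number of gaps of `S` at positions `< c` (junk value `0` if there are infinitely many). -/
noncomputable def gapsBelow (S : Set ℤ) (c : ℤ) : ℕ := (Set.Iio c \ S).ncard

/-- The charge of a Maya diagram: beads at nonnegative positions minus gaps at negative ones. -/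
noncomputable def charge (S : Set ℤ) : ℤ := beadsFrom S 0 - gapsBelow S 0

section Maya

open Set

variable {S : Set ℤ}

lemma IsMaya.finite_inter_Ici (hS : IsMaya S) (c : ℤ) : (S ∩ Ici c).Finite :=
  (bddBelow_Ici.mono inter_subset_right).finite_of_bddAbove (hS.bddAbove.mono inter_subset_left)

lemma IsMaya.finite_Iio_sdiff (hS : IsMaya S) (c : ℤ) : (Iio c \ S).Finite :=
  (hS.bddBelow_compl.mono fun _ hx => hx.2).finite_of_bddAbove (bddAbove_Iio.mono sdiff_subset)

lemma beadsFrom_of_notMem {c : ℤ} (hc : c ∉ S) : beadsFrom S c = beadsFrom S (c + 1) := by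
  have hinter : S ∩ Ici c = S ∩ Ici (c + 1) := by
    ext x
    simp only [mem_inter_iff, mem_Ici]
    grind
  rw [beadsFrom, hinter, beadsFrom]

lemma IsMaya.beadsFrom_of_mem (hS : IsMaya S) {c : ℤ} (hc : c ∈ S) :
    beadsFrom S c = beadsFrom S (c + 1) + 1 := by
  have hinsert : S ∩ Ici c = insert c (S ∩ Ici (c + 1)) := by
    ext x
    simp only [mem_inter_iff, mem_Ici, mem_insert_iff]
    grind
  rw [beadsFrom, hinsert, ncard_insert_of_notMem (by simp) (hS.finite_inter_Ici _), beadsFrom]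

lemma gapsBelow_of_mem {c : ℤ} (hc : c ∈ S) : gapsBelow S (c + 1) = gapsBelow S c := by
  have hsdiff : Iio (c + 1) \ S = Iio c \ S := by
    ext x
    simp only [mem_sdiff, mem_Iio]
    grind
  rw [gapsBelow, hsdiff, gapsBelow]

lemma IsMaya.gapsBelow_of_notMem (hS : IsMaya S) {c : ℤ} (hc : c ∉ S) :
    gapsBelow S (c + 1) = gapsBelow S c + 1 := by
  have hinsert : Iio (c + 1) \ S = insert c (Iio c \ S) := by
    ext x
    simp only [mem_sdiff, mem_Iio, mem_insert_iff]
    grind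
  rw [gapsBelow, hinsert, ncard_insert_of_notMem (by simp) (hS.finite_Iio_sdiff _), gapsBelow]

/-- Moving the reference point one step to the right trades a bead for nothing or nothing for a
gap. -/
lemma IsMaya.beadsFrom_sub_gapsBelow (hS : IsMaya S) (c : ℤ) :
    (beadsFrom S c : ℤ) - gapsBelow S c = charge S - c := by
  have hstep (b : ℤ) : (beadsFrom S (b + 1) : ℤ) - gapsBelow S (b + 1) =
      beadsFrom S b - gapsBelow S b - 1 := by
    by_cases hb : b ∈ S
    · rw [hS.beadsFrom_of_mem hb, gapsBelow_of_mem hb]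
      lia
    · rw [beadsFrom_of_notMem hb, hS.gapsBelow_of_notMem hb]
      lia
  induction c with
  | zero => simp [charge]
  | succ n ih =>
    have := hstep n
    lia
  | pred n ih =>
    have := hstep (-n - 1)
    rw [sub_add_cancel] at this
    lia

lemma IsMaya.beadsFrom_antitone (hS : IsMaya S) : Antitone (beadsFrom S) := fun _ _ hbc =>
  ncard_le_ncard (inter_subset_inter_right S (Ici_subset_Ici.2 hbc)) (hS.finite_inter_Ici _)

lemma IsMaya.gapsBelow_monotone (hS : IsMaya S) : Monotone (gapsBelow S) := fun _ _ hbc =>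
  ncard_le_ncard (sdiff_subset_sdiff_left (Iio_subset_Iio hbc)) (hS.finite_Iio_sdiff _)

lemma IsMaya.charge_eq_of_Iio_subset (hS : IsMaya S) {c : ℤ} (hc : Iio c ⊆ S) :
    charge S = beadsFrom S c + c := by
  have hgaps : gapsBelow S c = 0 := by rw [gapsBelow, sdiff_eq_empty.2 hc, ncard_empty]
  have := hS.beadsFrom_sub_gapsBelow c
  lia

lemma charge_Iio_zero : charge (Iio 0) = 0 := by
  simp [charge, beadsFrom, gapsBelow, Iio_inter_Ici]

lemma IsMaya.exists_Iio_subset (hS : IsMaya S) : ∃ c, Iio c ⊆ S := by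
  obtain ⟨c, hc⟩ := hS.bddBelow_compl
  exact ⟨c, fun x hx => by_contra fun hxS => (hc hxS).not_gt hx⟩

lemma IsMaya.insert_sdiff_singleton (hS : IsMaya S) (x y : ℤ) : IsMaya (insert y (S \ {x})) where
  bddAbove := (hS.bddAbove.mono sdiff_subset).insert y
  bddBelow_compl := by
    refine (hS.bddBelow_compl.insert x).mono fun z hz => ?_
    simp only [mem_compl_iff, mem_insert_iff, mem_sdiff, mem_singleton_iff] at hz ⊢
    tauto

lemma beadsFrom_insert_sdiff_singleton_of_le {c x y : ℤ} (hx : x ∈ S) (hy : y ∉ S) (hcx : c ≤ x)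
    (hcy : c ≤ y) : beadsFrom (insert y (S \ {x})) c = beadsFrom S c := by
  have hinter : insert y (S \ {x}) ∩ Ici c = insert y ((S ∩ Ici c) \ {x}) := by
    rw [insert_inter_of_mem (mem_Ici.2 hcy), sdiff_inter_right_comm]
  have hyc : y ∉ S ∩ Ici c := fun h => hy h.1
  have hxc : x ∈ S ∩ Ici c := ⟨hx, hcx⟩
  rw [beadsFrom, hinter, ncard_exchange hyc hxc, beadsFrom]

lemma IsMaya.charge_insert_sdiff_singleton (hS : IsMaya S) {x y : ℤ} (hx : x ∈ S) (hy : y ∉ S) :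
    charge (insert y (S \ {x})) = charge S := by
  obtain ⟨c, hc⟩ := hS.exists_Iio_subset
  obtain ⟨b, hbc, hbx, hby⟩ : ∃ b, b ≤ c ∧ b ≤ x ∧ b ≤ y :=
    ⟨min c (min x y), by simp⟩
  have hb : Iio b ⊆ S := (Iio_subset_Iio hbc).trans hc
  have hb' : Iio b ⊆ insert y (S \ {x}) := fun z hz =>
    mem_insert_of_mem _ ⟨hb hz, (hz.trans_le hbx).ne⟩
  rw [(hS.insert_sdiff_singleton x y).charge_eq_of_Iio_subset hb', hS.charge_eq_of_Iio_subset hb,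
    beadsFrom_insert_sdiff_singleton_of_le hx hy hbx hby]

lemma IsMaya.beadsFrom_eq_insert_sdiff_singleton (hS : IsMaya S) {x y : ℤ} (hx : x ∈ S)
    (hy : y ∉ S) (hyx : y < x) (c : ℤ) :
    beadsFrom S c = beadsFrom (insert y (S \ {x})) c + if c ∈ Ioc y x then 1 else 0 := by
  rcases le_or_gt c y with hcy | hcy
  · rw [beadsFrom_insert_sdiff_singleton_of_le hx hy (hcy.trans hyx.le) hcy,
      if_neg (notMem_Ioc_of_le hcy), add_zero]
  · have hinter : insert y (S \ {x}) ∩ Ici c = (S ∩ Ici c) \ {x} := by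
      rw [insert_inter_of_notMem (notMem_Ici.2 hcy), sdiff_inter_right_comm]
    rw [beadsFrom, beadsFrom, hinter]
    split_ifs with hc
    · have hxc : x ∈ S ∩ Ici c := ⟨hx, hc.2⟩
      exact (ncard_sdiff_singleton_add_one hxc (hS.finite_inter_Ici c)).symm
    · have hxc : x ∉ S ∩ Ici c := fun h => hc ⟨hcy, h.2⟩
      rw [sdiff_singleton_eq_self hxc, add_zero]

lemma beadsFrom_preimage_add (s c : ℤ) : beadsFrom ((· + s) ⁻¹' S) c = beadsFrom S (c + s) := by
  have himage : S ∩ Ici (c + s) = (· + s) '' ((· + s) ⁻¹' S ∩ Ici c) := by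
    rw [image_preimage_inter, image_add_const_Ici]
  rw [beadsFrom, beadsFrom, himage, ncard_image_of_injective _ (add_left_injective s)]

lemma gapsBelow_preimage_add (s c : ℤ) : gapsBelow ((· + s) ⁻¹' S) c = gapsBelow S (c + s) := by
  have himage : Iio (c + s) \ S = (· + s) '' (Iio c \ (· + s) ⁻¹' S) := by
    rw [image_sdiff_preimage, image_add_const_Iio]
  rw [gapsBelow, gapsBelow, himage, ncard_image_of_injective _ (add_left_injective s)]

lemma IsMaya.charge_preimage_add (hS : IsMaya S) (s : ℤ) :
    charge ((· + s) ⁻¹' S) = charge S - s := by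
  rw [← hS.beadsFrom_sub_gapsBelow, charge, beadsFrom_preimage_add, gapsBelow_preimage_add,
    zero_add]

lemma beadsFrom_zero_of_isLowerSet (hS : IsLowerSet S) : beadsFrom S 0 = (charge S).toNat := by
  have hzero : beadsFrom S 0 = 0 ∨ gapsBelow S 0 = 0 := by
    rcases (S ∩ Ici 0).eq_empty_or_nonempty with hempty | ⟨x, hxS, hx⟩
    · simp [beadsFrom, hempty]
    · have hIio : Iio 0 ⊆ S := fun y hy => hS (hy.le.trans hx) hxS
      simp [gapsBelow, sdiff_eq_empty.2 hIio]
  rw [charge]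
  lia

/-- The mirror image of a Maya diagram in the point `-1/2`, with beads and gaps exchanged.
On the Maya diagram of a partition this is conjugation. -/
def reflect (S : Set ℤ) : Set ℤ := {x | -1 - x ∉ S}

lemma beadsFrom_reflect (c : ℤ) : beadsFrom (reflect S) c = gapsBelow S (-c) := by
  have himage : reflect S ∩ Ici c = (-1 - ·) '' (Iio (-c) \ S) := by
    ext x
    simp only [reflect, mem_inter_iff, mem_ofPred_eq, mem_Ici, mem_image, mem_sdiff, mem_Iio]
    refine ⟨fun h => ⟨-1 - x, ⟨by lia, h.1⟩, by lia⟩, ?_⟩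
    rintro ⟨y, ⟨hy, hyS⟩, rfl⟩
    exact ⟨by simpa using hyS, by lia⟩
  rw [beadsFrom, himage, ncard_image_of_injective _ sub_right_injective, gapsBelow]

lemma reflect_reflect : reflect (reflect S) = S := by
  ext x
  simp [reflect]

lemma gapsBelow_reflect (c : ℤ) : gapsBelow (reflect S) c = beadsFrom S (-c) := by
  rw [← neg_neg c, ← beadsFrom_reflect, reflect_reflect, neg_neg]

lemma charge_reflect : charge (reflect S) = -charge S := by
  rw [charge, charge, beadsFrom_reflect, gapsBelow_reflect, neg_zero, neg_sub]

/-- The amount by which, on one runner `S`, the nonnegative beads of the core together with those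
of the cocore outnumber those of the partition. -/
noncomputable def excess (S : Set ℤ) : ℤ :=
  (charge S).toNat + beadsFrom S (charge S) - beadsFrom S 0

lemma IsMaya.excess_nonneg (hS : IsMaya S) : 0 ≤ excess S := by
  have hsubset : S ∩ Ici 0 ⊆ S ∩ Ici (charge S) ∪ Ico 0 (charge S) := by
    intro x
    simp only [mem_inter_iff, mem_union, mem_Ici, mem_Ico]
    grind
  have hcard : (Ico 0 (charge S)).ncard = (charge S).toNat := by
    rw [ncard_eq_toFinset_card', toFinset_Ico, Int.card_Ico, sub_zero]
  have := ncard_le_ncard hsubset ((hS.finite_inter_Ici _).union (finite_Ico _ _))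
  have := ncard_union_le (S ∩ Ici (charge S)) (Ico 0 (charge S))
  rw [excess, beadsFrom, beadsFrom]
  lia

lemma excess_of_charge_eq_zero (h : charge S = 0) : excess S = 0 := by
  simp [excess, h]

/-- Relative to the reference point `charge S` there are as many beads on the right as gaps on the
left, which is what reflection exchanges. -/
lemma IsMaya.excess_reflect (hS : IsMaya S) : excess (reflect S) = excess S := by
  have hcharge := hS.beadsFrom_sub_gapsBelow (charge S)
  have hzero := hS.beadsFrom_sub_gapsBelow 0
  simp only [excess, charge_reflect, beadsFrom_reflect, neg_neg, neg_zero]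
  lia

/-- The `r`-th runner of the `p`-abacus displaying the beads `S`. -/
def runner (p r : ℕ) (S : Set ℤ) : Set ℤ := {k | (p : ℤ) * k + r ∈ S}

lemma runner_reflect {p r r' : ℕ} (h : r + r' + 1 = p) :
    runner p r' (reflect S) = reflect (runner p r S) := by
  ext k
  have : -1 - ((p : ℤ) * k + r') = p * (-1 - k) + r := by
    rw [← h]
    push_cast
    ring
  simp only [runner, reflect, mem_ofPred_eq, this]

lemma IsMaya.isMaya_runner (hS : IsMaya S) {p : ℕ} (hp : 0 < p) (r : ℕ) :
    IsMaya (runner p r S) where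
  bddAbove := by
    obtain ⟨b, hb⟩ := hS.bddAbove
    refine ⟨max b 0, fun k hk => le_max_iff.2 (or_iff_not_imp_right.2 fun hk0 => ?_)⟩
    have : (p : ℤ) * k + r ≤ b := hb hk
    nlinarith
  bddBelow_compl := by
    obtain ⟨b, hb⟩ := hS.bddBelow_compl
    refine ⟨min (b - r) 0, fun k hk => min_le_iff.2 (or_iff_not_imp_right.2 fun hk0 => ?_)⟩
    have : b ≤ (p : ℤ) * k + r := hb hk
    nlinarith

lemma runner_Iio_zero {p r : ℕ} (hr : r < p) : runner p r (Iio 0) = Iio 0 := by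
  ext k
  simp only [runner, mem_Iio, mem_ofPred_eq]
  constructor <;> intro hk <;> nlinarith

lemma IsMaya.charge_runner_insert_sdiff_singleton (hS : IsMaya S) {p : ℕ} (hp : 0 < p) (r : ℕ)
    {g : ℤ} (hg : g ∉ S) (hgp : g + p ∈ S) :
    charge (runner p r (insert g (S \ {g + p}))) = charge (runner p r S) := by
  have hp' : (p : ℤ) ≠ 0 := by lia
  by_cases h : ∃ k : ℤ, p * k + r = g
  · obtain ⟨k, rfl⟩ := h
    have hrunner : runner p r (insert (p * k + r : ℤ) (S \ {(p * k + r + p : ℤ)})) =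
        insert k (runner p r S \ {k + 1}) := by
      ext j
      have hsucc : (p : ℤ) * j + r = p * k + r + p ↔ j = k + 1 := by
        rw [add_right_comm, add_left_inj, ← mul_add_one, mul_right_inj' hp']
      simp [runner, hsucc, hp.ne']
    rw [hrunner, (hS.isMaya_runner hp r).charge_insert_sdiff_singleton _ hg]
    simpa only [runner, mem_ofPred_eq, mul_add_one, add_right_comm] using hgp
  · congr 1
    ext j
    have hj : (p : ℤ) * j + r ≠ g := fun hj => h ⟨j, hj⟩
    have hj' : (p : ℤ) * j + r ≠ g + p := fun hj => h ⟨j - 1, by linarith⟩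
    simp [runner, hj, hj']

lemma isLowerSet_runner {p : ℕ} (r : ℕ) (hS : ∀ x ∈ S, x - p ∈ S) :
    IsLowerSet (runner p r S) := by
  intro a b hba ha
  induction b, hba using Int.leInductionDown with
  | base => exact ha
  | pred k _ ih => simpa only [runner, mem_ofPred_eq, mul_sub_one, sub_add_eq_add_sub] using hS _ ih

lemma IsMaya.beadsFrom_zero_eq_sum_runner (hS : IsMaya S) {p : ℕ} (hp : 0 < p) :
    beadsFrom S 0 = ∑ r ∈ Finset.range p, beadsFrom (runner p r S) 0 := by
  have hfin := hS.finite_inter_Ici 0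
  have hp' : (p : ℤ) ≠ 0 := by lia
  rw [beadsFrom, ncard_eq_toFinset_card _ hfin,
    Finset.card_eq_sum_card_fiberwise (f := fun x : ℤ => (x % p).toNat) (t := Finset.range p)]
  · refine Finset.sum_congr rfl fun r hr => ?_
    have hrp : (r : ℤ) < p := by simpa using hr
    have himage : (({x ∈ hfin.toFinset | (x % p).toNat = r} : Finset ℤ) : Set ℤ) =
        (fun k : ℤ => p * k + r) '' (runner p r S ∩ Ici 0) := by
      ext x
      simp only [Finset.coe_filter, Finite.mem_toFinset, mem_inter_iff, mem_Ici, mem_ofPred_eq,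
        mem_image, runner]
      constructor
      · rintro ⟨⟨hxS, hx⟩, hxr⟩
        have hx' : p * (x / p) + r = x := by
          rw [← hxr, Int.toNat_of_nonneg (Int.emod_nonneg x hp'), Int.mul_ediv_add_emod]
        exact ⟨x / p, ⟨by rwa [hx'], Int.ediv_nonneg hx (by lia)⟩, hx'⟩
      · rintro ⟨k, ⟨hkS, hk⟩, rfl⟩
        refine ⟨⟨hkS, by positivity⟩, ?_⟩
        rw [Int.mul_add_emod_self_left, Int.emod_eq_of_lt (by lia) hrp, Int.toNat_natCast]
    have hinj : Function.Injective fun k : ℤ => p * k + r :=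
      (add_left_injective _).comp (mul_right_injective₀ hp')
    rw [beadsFrom, ← ncard_image_of_injective _ hinj, ← himage, ncard_coe_finset]
  · intro x _
    have := Int.emod_nonneg x hp'
    have := Int.emod_lt_of_pos x (b := p) (by lia)
    simp only [Finset.coe_range, mem_Iio]
    lia

end Maya

/-- The content of a cell, its column minus its row; it indexes the diagonals of a diagram. -/
def content (c : ℕ × ℕ) : ℤ := (c.2 : ℤ) - c.1

/-- The cells of `l` on the diagonal of content `t`. -/
def diagonal (l : YoungDiagram) (t : ℤ) : Finset (ℕ × ℕ) := {c ∈ l.cells | content c = t}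

/-- The content of the last cell of row `i`, or `-i - 1` when that row is empty; this is where the
Maya diagram of `l` has its `i`-th bead from the right. -/
def beadPosition (l : YoungDiagram) (i : ℕ) : ℤ := (l.rowLen i : ℤ) - i - 1

/-- The Maya diagram of a partition: the β-sets `betaSet l N`, shifted by `-N`, in the limit
`N → ∞`. -/
def mayaSet (l : YoungDiagram) : Set ℤ := Set.range (beadPosition l)

section Diagram

open Finset

variable {l m : YoungDiagram} {p : ℕ}

lemma mem_diagonal {t : ℤ} {c : ℕ × ℕ} : c ∈ diagonal l t ↔ c ∈ l ∧ content c = t := by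
  rw [diagonal, mem_filter, YoungDiagram.mem_cells]

lemma beadPosition_strictAnti (l : YoungDiagram) : StrictAnti (beadPosition l) := by
  intro i j hij
  have := l.rowLen_anti i j hij.le
  unfold beadPosition
  lia

lemma rowLen_eq_zero_iff {i : ℕ} : l.rowLen i = 0 ↔ l.colLen 0 ≤ i := by
  rw [← not_lt, ← YoungDiagram.mem_iff_lt_colLen, YoungDiagram.mem_iff_lt_rowLen, not_lt,
    Nat.le_zero]

lemma mem_mayaSet_of_lt_neg_colLen {x : ℤ} (hx : x < -(l.colLen 0 : ℤ)) : x ∈ mayaSet l := by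
  refine ⟨(-x - 1).toNat, ?_⟩
  rw [beadPosition, rowLen_eq_zero_iff.2 (by lia)]
  lia

lemma isMaya_mayaSet (l : YoungDiagram) : IsMaya (mayaSet l) where
  bddAbove := ⟨beadPosition l 0, by
    rintro _ ⟨i, rfl⟩
    exact (beadPosition_strictAnti l).antitone i.zero_le⟩
  bddBelow_compl := ⟨-l.colLen 0, fun _ hx => not_lt.1 (mt mem_mayaSet_of_lt_neg_colLen hx)⟩

lemma mem_iff_content_le_beadPosition {i j : ℕ} :
    (i, j) ∈ l ↔ content (i, j) ≤ beadPosition l i := by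
  rw [YoungDiagram.mem_iff_lt_rowLen, content, beadPosition]
  lia

/-- The rows `i` with a bead at `t` or further right are the first `-t` rows, whose bead need
not come from a cell of content `t`, and the rows meeting the diagonal of content `t`. -/
lemma beadsFrom_mayaSet (l : YoungDiagram) (t : ℤ) :
    beadsFrom (mayaSet l) t = #(diagonal l t) + (-t).toNat := by
  have himage : mayaSet l ∩ Set.Ici t =
      beadPosition l '' ((diagonal l t).image Prod.fst ∪ range (-t).toNat : Finset ℕ) := by
    ext x
    simp only [mayaSet, Set.mem_inter_iff, Set.mem_range, Set.mem_Ici, Set.mem_image, mem_coe,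
      mem_union, mem_image, mem_diagonal, mem_range]
    constructor
    · rintro ⟨⟨i, rfl⟩, hi⟩
      refine ⟨i, or_iff_not_imp_right.2 fun hit => ⟨(i, (i + t).toNat), ?_, rfl⟩, rfl⟩
      rw [mem_iff_content_le_beadPosition]
      simp only [content]
      lia
    · rintro ⟨i, ⟨⟨_, j⟩, ⟨hij, rfl⟩, rfl⟩ | hi, rfl⟩
      · exact ⟨⟨_, rfl⟩, mem_iff_content_le_beadPosition.1 hij⟩
      · refine ⟨⟨i, rfl⟩, ?_⟩
        unfold beadPosition
        lia
  have hdisjoint : Disjoint ((diagonal l t).image Prod.fst) (range (-t).toNat) := by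
    simp only [disjoint_left, mem_image, mem_diagonal, content, mem_range]
    rintro _ ⟨⟨i, j⟩, ⟨-, rfl⟩, rfl⟩
    lia
  have hinj : Set.InjOn Prod.fst (diagonal l t : Set (ℕ × ℕ)) := by
    rintro ⟨i, j⟩ hij ⟨i', j'⟩ hij' rfl
    simp only [mem_coe, mem_diagonal, content] at hij hij'
    simp only [Prod.mk.injEq, true_and]
    lia
  rw [beadsFrom, himage, Set.ncard_image_of_injective _ (beadPosition_strictAnti l).injective,
    Set.ncard_coe_finset, card_union_of_disjoint hdisjoint, card_image_of_injOn hinj, card_range]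

lemma durfee_eq_beadsFrom (l : YoungDiagram) : durfee l = beadsFrom (mayaSet l) 0 := by
  rw [beadsFrom_mayaSet, neg_zero, Int.toNat_zero, add_zero, durfee, diagonal]
  congr! 3 with c
  rw [content]
  lia

lemma mem_mayaSet_iff_card_diagonal {t : ℤ} :
    t ∈ mayaSet l ↔
      #(diagonal l t) + (-t).toNat = #(diagonal l (t + 1)) + (-(t + 1)).toNat + 1 := by
  rw [← beadsFrom_mayaSet, ← beadsFrom_mayaSet]
  refine ⟨(isMaya_mayaSet l).beadsFrom_of_mem, fun h => by_contra fun ht => ?_⟩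
  rw [beadsFrom_of_notMem ht] at h
  lia

lemma notMem_mayaSet_iff_card_diagonal {t : ℤ} :
    t ∉ mayaSet l ↔ #(diagonal l t) + (-t).toNat = #(diagonal l (t + 1)) + (-(t + 1)).toNat := by
  rw [← beadsFrom_mayaSet, ← beadsFrom_mayaSet]
  refine ⟨beadsFrom_of_notMem, fun h ht => ?_⟩
  rw [(isMaya_mayaSet l).beadsFrom_of_mem ht] at h
  lia

lemma card_diagonal_transpose (l : YoungDiagram) (t : ℤ) :
    #(diagonal l.transpose t) = #(diagonal l (-t)) := by
  refine card_bij' (fun c _ => c.swap) (fun c _ => c.swap) ?_ ?_ (by simp) (by simp) <;>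
  · simp only [mem_diagonal, content, YoungDiagram.mem_transpose, Prod.fst_swap, Prod.snd_swap,
      Prod.swap_swap]
    exact fun c hc => ⟨hc.1, by lia⟩

lemma mayaSet_transpose (l : YoungDiagram) : mayaSet l.transpose = reflect (mayaSet l) := by
  ext t
  rw [reflect, Set.mem_ofPred_eq, notMem_mayaSet_iff_card_diagonal, mem_mayaSet_iff_card_diagonal,
    card_diagonal_transpose, card_diagonal_transpose, show -1 - t = -(t + 1) by ring,
    show -(t + 1) + 1 = -t by ring]
  lia

lemma mayaSet_bot : mayaSet ⊥ = Set.Iio 0 := by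
  ext t
  rw [mem_mayaSet_iff_card_diagonal]
  simp only [diagonal, YoungDiagram.cells_bot, filter_empty, card_empty, Set.mem_Iio]
  lia

lemma image_natCast_add_range (d : ℤ) (p : ℕ) :
    (range p).image (fun k : ℕ => d + (k : ℤ)) = Ico d (d + p) := by
  ext t
  simp only [mem_image, mem_range, mem_Ico]
  exact ⟨by rintro ⟨k, hk, rfl⟩; lia, fun ht => ⟨(t - d).toNat, by lia, by lia⟩⟩

lemma isRimHookRemoval_iff : IsRimHookRemoval p l m ↔
    m.cells ⊆ l.cells ∧ Set.InjOn content (l.cells \ m.cells : Finset (ℕ × ℕ)) ∧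
      ∃ d : ℤ, (l.cells \ m.cells).image content = Ico d (d + p) := by
  simp only [IsRimHookRemoval, image_natCast_add_range]
  refine and_congr_right fun _ => ?_
  rw [← exists_and_left, ← exists_and_left]
  refine exists_congr fun d => and_congr_left fun (himage : image content _ = _) => ?_
  rw [← card_image_iff, himage, Int.card_Ico]
  lia

lemma IsRimHookRemoval.exists_card_diagonal (h : IsRimHookRemoval p l m) :
    ∃ d : ℤ, ∀ t, #(diagonal l t) = #(diagonal m t) + if t ∈ Ico d (d + p) then 1 else 0 := by
  obtain ⟨hsub, hinj, d, himage⟩ := isRimHookRemoval_iff.1 h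
  refine ⟨d, fun t => ?_⟩
  have hsplit : diagonal l t = diagonal m t ∪ {c ∈ l.cells \ m.cells | content c = t} := by
    rw [diagonal, diagonal, ← filter_union, union_sdiff_of_subset hsub]
  have hdisjoint : Disjoint (diagonal m t) {c ∈ l.cells \ m.cells | content c = t} :=
    disjoint_filter_filter disjoint_sdiff
  have hfiber : #{c ∈ l.cells \ m.cells | content c = t} = #{s ∈ Ico d (d + p) | s = t} := by
    rw [← himage, filter_image,
      card_image_of_injOn (hinj.mono (coe_subset.2 (filter_subset _ _)))]
  rw [hsplit, card_union_of_disjoint hdisjoint, hfiber, filter_eq']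
  split_ifs <;> simp

lemma IsRimHookRemoval.exists_mayaSet_eq (hp : 0 < p) (h : IsRimHookRemoval p l m) :
    ∃ g : ℤ, g ∉ mayaSet l ∧ g + p ∈ mayaSet l ∧
      mayaSet m = insert g (mayaSet l \ {g + p}) := by
  obtain ⟨d, hd⟩ := h.exists_card_diagonal
  simp only [mem_Ico] at hd
  have hchange (t : ℤ) : (t ∉ mayaSet l ∧ t ∈ mayaSet m ↔ t = d - 1) ∧
      (t ∈ mayaSet l ∧ t ∉ mayaSet m ↔ t = d - 1 + p) := by
    have := hd t
    have := hd (t + 1)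
    have := mem_mayaSet_iff_card_diagonal (l := l) (t := t)
    have := notMem_mayaSet_iff_card_diagonal (l := l) (t := t)
    have := mem_mayaSet_iff_card_diagonal (l := m) (t := t)
    have := notMem_mayaSet_iff_card_diagonal (l := m) (t := t)
    grind
  refine ⟨d - 1, ((hchange _).1.2 rfl).1, ((hchange _).2.2 rfl).1, ?_⟩
  ext t
  have := hchange t
  simp only [Set.mem_insert_iff, Set.mem_sdiff, Set.mem_singleton_iff]
  lia

lemma charge_runner_mayaSet_of_reflTransGen (hp : 0 < p) (r : ℕ)
    (h : Relation.ReflTransGen (IsRimHookRemoval p) l m) :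
    charge (runner p r (mayaSet m)) = charge (runner p r (mayaSet l)) := by
  induction h with
  | refl => rfl
  | tail _ hstep ih =>
    obtain ⟨g, hg, hgp, heq⟩ := hstep.exists_mayaSet_eq hp
    rw [heq, (isMaya_mayaSet _).charge_runner_insert_sdiff_singleton hp r hg hgp, ih]

end Diagram

section Core

open Finset

variable {S : Set ℤ} {l m : YoungDiagram} {p : ℕ}

lemma charge_mayaSet (l : YoungDiagram) : charge (mayaSet l) = 0 := by
  have hgaps : gapsBelow (mayaSet l) 0 = beadsFrom (mayaSet l) 0 := by
    rw [← neg_zero, ← beadsFrom_reflect, ← mayaSet_transpose, beadsFrom_mayaSet,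
      card_diagonal_transpose, neg_zero, beadsFrom_mayaSet, neg_zero]
  rw [charge, hgaps, sub_self]

lemma mem_iff_lt_beadsFrom {c : ℕ × ℕ} :
    c ∈ l ↔ c.1 < beadsFrom (mayaSet l) (content c) := by
  have hfin := (isMaya_mayaSet l).finite_inter_Ici (content c)
  have hanti := beadPosition_strictAnti l
  rw [mem_iff_content_le_beadPosition (i := c.1) (j := c.2)]
  constructor
  · intro hc
    have hsubset : beadPosition l '' Set.Iic c.1 ⊆ mayaSet l ∩ Set.Ici (content c) := by
      rintro _ ⟨i, hi, rfl⟩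
      exact ⟨⟨i, rfl⟩, hc.trans (hanti.antitone hi)⟩
    have := Set.ncard_le_ncard hsubset hfin
    rw [Set.ncard_image_of_injective _ hanti.injective, ← coe_Iic, Set.ncard_coe_finset,
      Nat.card_Iic] at this
    exact this
  · contrapose!
    intro hc
    have hsubset : mayaSet l ∩ Set.Ici (content c) ⊆ beadPosition l '' Set.Iio c.1 := by
      rintro _ ⟨⟨i, rfl⟩, hi⟩
      exact ⟨i, hanti.lt_iff_gt.1 (hc.trans_le hi), rfl⟩
    have := Set.ncard_le_ncard hsubset ((Set.finite_Iio _).image _)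
    rwa [Set.ncard_image_of_injective _ hanti.injective, ← coe_Iio, Set.ncard_coe_finset,
      Nat.card_Iio] at this

/-- Going up or left inside the quadrant, either the content drops and `beadsFrom` grows, or the
content rises and the column index is controlled by `gapsBelow`. -/
lemma IsMaya.isLowerSet_lt_beadsFrom (hS : IsMaya S) (hcharge : charge S = 0) :
    IsLowerSet {c : ℕ × ℕ | c.1 < beadsFrom S (content c)} := by
  rintro ⟨i, j⟩ ⟨i', j'⟩ ⟨hi, hj⟩ (hij : i < _)
  have h := hS.beadsFrom_sub_gapsBelow (content (i, j))
  have h' := hS.beadsFrom_sub_gapsBelow (content (i', j'))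
  change i' < _
  rcases le_total (content (i', j')) (content (i, j)) with hle | hle
  · exact hi.trans_lt (hij.trans_le (hS.beadsFrom_antitone hle))
  · have := hS.gapsBelow_monotone hle
    simp only [content] at *
    lia

lemma exists_isRimHookRemoval {g : ℤ} (hg : g ∉ mayaSet l) (hgp : g + p ∈ mayaSet l) :
    ∃ m, IsRimHookRemoval p l m := by
  have hlt : g < g + p := lt_of_le_of_ne (by lia) fun h => hg (h ▸ hgp)
  have hS := isMaya_mayaSet l
  have hS' := hS.insert_sdiff_singleton (g + p) g
  have hcharge := (hS.charge_insert_sdiff_singleton hgp hg).trans (charge_mayaSet l)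
  have hbeads := hS.beadsFrom_eq_insert_sdiff_singleton hgp hg hlt
  set S' := insert g (mayaSet l \ {g + (p : ℤ)})
  -- By `mem_iff_lt_beadsFrom`, this is the only possible diagram with Maya diagram `S'`: it loses
  -- the last cell of each diagonal whose content lies in `(g, g + p]`.
  let m : YoungDiagram :=
    { cells := {c ∈ l.cells | c.1 < beadsFrom S' (content c)}
      isLowerSet := by
        rw [coe_filter]
        exact l.isLowerSet.inter (hS'.isLowerSet_lt_beadsFrom hcharge) }
  have hmem (c : ℕ × ℕ) : c ∈ l.cells \ m.cells ↔
      content c ∈ Ioc g (g + p) ∧ c.1 = beadsFrom S' (content c) := by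
    have := hbeads (content c)
    simp only [m, mem_sdiff, mem_filter, YoungDiagram.mem_cells, mem_iff_lt_beadsFrom,
      Set.mem_Ioc, mem_Ioc] at this ⊢
    grind
  refine ⟨m, isRimHookRemoval_iff.2 ⟨filter_subset _ _, ?_, g + 1, ?_⟩⟩
  · intro c hc c' hc' hcontent
    have hrow : c.1 = c'.1 := by
      rw [((hmem c).1 hc).2, ((hmem c').1 hc').2, hcontent]
    simp only [content] at hcontent
    ext <;> lia
  · ext t
    have hgaps := hS'.beadsFrom_sub_gapsBelow t
    have hcontent : content (beadsFrom S' t, (beadsFrom S' t + t).toNat) = t := by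
      simp only [content]
      lia
    simp only [mem_image, hmem, mem_Ioc, mem_Ico]
    constructor
    · rintro ⟨c, ⟨hc, -⟩, rfl⟩
      lia
    · exact fun ht => ⟨_, ⟨by rw [hcontent]; lia, by rw [hcontent]⟩, hcontent⟩

lemma IsPCore.sub_mem_mayaSet (h : IsPCore p l) {x : ℤ} (hx : x ∈ mayaSet l) :
    x - p ∈ mayaSet l := by
  by_contra hg
  obtain ⟨m, hm⟩ := exists_isRimHookRemoval hg (by rwa [sub_add_cancel])
  exact h m hm

end Core

/-- The Maya diagram whose beads at nonnegative positions form the finite set `B`; padding `B`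
translates it. -/
def mayaOfBeta (B : Finset ℕ) : Set ℤ := {x | x < 0 ∨ x.toNat ∈ B}

section Quotient

variable {l m : YoungDiagram} {p : ℕ}

lemma mayaOfBeta_padBeta (B : Finset ℕ) (d : ℕ) :
    mayaOfBeta (padBeta B d) = (· + -(d : ℤ)) ⁻¹' mayaOfBeta B := by
  ext x
  simp only [mayaOfBeta, padBeta, Set.mem_ofPred_eq, Set.mem_preimage, Finset.mem_union,
    Finset.mem_image, Finset.mem_range]
  constructor
  · rintro (hx | ⟨y, hy, hyx⟩ | hx)
    · lia
    · exact Or.inr (by rwa [show (x + -d).toNat = y by lia])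
    · lia
  · rintro (hx | hx)
    · lia
    · exact or_iff_not_imp_left.2 fun hx0 => or_iff_not_imp_right.2 fun hxd => ⟨_, hx, by lia⟩

lemma mayaOfBeta_runnerSet {r : ℕ} (hr : r < p) (B : Finset ℕ) :
    mayaOfBeta (runnerSet p r B) = runner p r (mayaOfBeta B) := by
  ext k
  simp only [mayaOfBeta, runnerSet, runner, Set.mem_ofPred_eq, Finset.mem_image, Finset.mem_filter]
  rcases lt_or_ge k 0 with hk | hk
  · exact iff_of_true (Or.inl hk) (Or.inl (by nlinarith))
  · lift k to ℕ using hk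
    have hnonneg : ¬ (p : ℤ) * k + r < 0 := not_lt.2 (by positivity)
    have htoNat : ((p : ℤ) * k + r).toNat = p * k + r := by lia
    simp only [hnonneg, htoNat, Int.toNat_natCast, Int.natCast_nonneg, not_lt.2, false_or]
    constructor
    · rintro ⟨x, ⟨hx, rfl⟩, rfl⟩
      rwa [Nat.div_add_mod]
    · refine fun hx => ⟨_, ⟨hx, ?_⟩, ?_⟩
      · rw [Nat.mul_add_mod, Nat.mod_eq_of_lt hr]
      · rw [Nat.mul_add_div (by lia), Nat.div_eq_of_lt hr, add_zero]

lemma mayaOfBeta_betaSet {N : ℕ} (hN : l.colLen 0 ≤ N) :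
    mayaOfBeta (betaSet l N) = (· + -(N : ℤ)) ⁻¹' mayaSet l := by
  ext x
  rcases lt_or_ge x 0 with hx | hx
  · exact iff_of_true (Or.inl hx) (mem_mayaSet_of_lt_neg_colLen (by lia))
  · lift x to ℕ using hx
    simp only [mayaOfBeta, betaSet, mayaSet, beadPosition, Set.mem_ofPred_eq, Set.mem_preimage,
      Set.mem_range, Finset.mem_image, Finset.mem_range, Int.toNat_natCast]
    constructor
    · rintro (hx | ⟨i, hi, rfl⟩)
      · lia
      · exact ⟨i, by lia⟩
    · rintro ⟨i, hi⟩
      have hiN : i < N := by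
        by_contra! h
        rw [rowLen_eq_zero_iff.2 (hN.trans h)] at hi
        lia
      exact Or.inr ⟨i, hiN, by lia⟩

lemma runner_preimage_add (S : Set ℤ) (r : ℕ) (s : ℤ) :
    runner p r ((· + p * s) ⁻¹' S) = (· + s) ⁻¹' runner p r S := by
  ext k
  simp only [runner, Set.mem_preimage, Set.mem_ofPred_eq, mul_add, add_right_comm]

lemma HasSamePQuotient.exists_runner_eq (h : HasSamePQuotient p l m) {r : ℕ} (hr : r < p) :
    ∃ s : ℤ, runner p r (mayaSet m) = (· + s) ⁻¹' runner p r (mayaSet l) := by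
  obtain ⟨_, hl, hm, ⟨n, rfl⟩, hrunner⟩ := h
  obtain ⟨d, e, hde⟩ := hrunner r hr
  replace hde := congrArg mayaOfBeta hde
  have hn : -((p * n : ℕ) : ℤ) = p * -n := by
    push_cast
    ring
  simp only [mayaOfBeta_padBeta, mayaOfBeta_runnerSet hr, mayaOfBeta_betaSet hl,
    mayaOfBeta_betaSet hm, hn, runner_preimage_add] at hde
  refine ⟨e - d, Set.ext fun k => ?_⟩
  have := Set.ext_iff.1 hde (k + e + n)
  simp only [Set.mem_preimage] at this ⊢
  convert this.symm using 1 <;> ring_nf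

end Quotient

lemma durfee_add_durfee_eq {p : ℕ} (hp : 0 < p) {l κ μ : YoungDiagram} (hκ : IsPCoreOf p l κ)
    (hμ : IsPCocoreOf p l μ) :
    (durfee κ : ℤ) + durfee μ =
      durfee l + ∑ r ∈ Finset.range p, excess (runner p r (mayaSet l)) := by
  simp only [durfee_eq_beadsFrom, (isMaya_mayaSet _).beadsFrom_zero_eq_sum_runner hp, Nat.cast_sum,
    ← Finset.sum_add_distrib]
  refine Finset.sum_congr rfl fun r hr => ?_
  rw [Finset.mem_range] at hr
  have hrunner := (isMaya_mayaSet l).isMaya_runner hp r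
  have hcore : beadsFrom (runner p r (mayaSet κ)) 0 = (charge (runner p r (mayaSet l))).toNat := by
    rw [beadsFrom_zero_of_isLowerSet (isLowerSet_runner r fun _ => hκ.2.sub_mem_mayaSet),
      charge_runner_mayaSet_of_reflTransGen hp r hκ.1]
  have hcocore : beadsFrom (runner p r (mayaSet μ)) 0 =
      beadsFrom (runner p r (mayaSet l)) (charge (runner p r (mayaSet l))) := by
    obtain ⟨s, hs⟩ := hμ.2.exists_runner_eq hr
    have hcharge : charge (runner p r (mayaSet μ)) = 0 := by
      rw [← charge_runner_mayaSet_of_reflTransGen hp r hμ.1, mayaSet_bot, runner_Iio_zero hr,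
        charge_Iio_zero]
    rw [hs, hrunner.charge_preimage_add, sub_eq_zero] at hcharge
    rw [hs, beadsFrom_preimage_add, zero_add, hcharge]
  rw [hcore, hcocore, excess]
  ring

lemma IsMaya.even_sum_excess_runner {S : Set ℤ} (hS : IsMaya S) (hreflect : reflect S = S)
    {p : ℕ} (hp : 0 < p) : Even (∑ r ∈ Finset.range p, excess (runner p r S)) := by
  have hpair {r r' : ℕ} (h : r + r' + 1 = p) :
      runner p r' S = reflect (runner p r S) := by
    rw [← runner_reflect h, hreflect]
  rw [← ZMod.intCast_eq_zero_iff_even, Int.cast_sum]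
  refine Finset.sum_involution (fun r _ => p - 1 - r) ?_ ?_ ?_ ?_
  · intro r hr
    rw [Finset.mem_range] at hr
    rw [hpair (r := r) (r' := p - 1 - r) (by lia), (hS.isMaya_runner hp r).excess_reflect]
    exact CharTwo.add_self_eq_zero _
  · intro r hr hne hfix
    rw [Finset.mem_range] at hr
    have hcharge := congrArg charge (hpair (r := r) (r' := r) (by lia))
    rw [charge_reflect] at hcharge
    exact hne (by rw [excess_of_charge_eq_zero (by lia), Int.cast_zero])
  · intro r hr
    rw [Finset.mem_range] at hr ⊢
    lia
  · intro r hr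
    rw [Finset.mem_range] at hr
    lia

theorem durfee_core_cocore_general (p : ℕ) (hp : 0 < p)
    (l κ μ : YoungDiagram) (hsc : l.transpose = l)
    (hκ : IsPCoreOf p l κ) (hμ : IsPCocoreOf p l μ) :
    (∃ d : ℕ, (durfee l : ℤ) = (durfee κ : ℤ) + durfee μ - 2 * d) ∧
    Even ((durfee κ : ℤ) + durfee μ - durfee l) := by
  have hS := isMaya_mayaSet l
  have hreflect : reflect (mayaSet l) = mayaSet l := by rw [← mayaSet_transpose, hsc]
  have hsum := durfee_add_durfee_eq hp hκ hμ
  have hnonneg : 0 ≤ ∑ r ∈ Finset.range p, excess (runner p r (mayaSet l)) :=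
    Finset.sum_nonneg fun r _ => (hS.isMaya_runner hp r).excess_nonneg
  obtain ⟨d, hd⟩ := hS.even_sum_excess_runner hreflect hp
  exact ⟨⟨d.toNat, by lia⟩, ⟨d, by lia⟩⟩

/-- Let `p` be an odd prime and `λ` a self-conjugate partition with
`p`-core `κ` and `p`-cocore `μ`. Then there is an integer `d ≥ 0` with
`𝔠(λ) = 𝔠(κ) + 𝔠(μ) − 2d`; in particular `𝔠(λ) ≡ 𝔠(κ) + 𝔠(μ) (mod 2)`. -/
theorem durfee_core_cocore (p : ℕ) (hp : p.Prime) (hpodd : Odd p)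
    (l κ μ : YoungDiagram) (hsc : l.transpose = l)
    (hκ : IsPCoreOf p l κ) (hμ : IsPCocoreOf p l μ) :
    (∃ d : ℕ, (durfee l : ℤ) = (durfee κ : ℤ) + durfee μ - 2 * d) ∧
    Even ((durfee κ : ℤ) + durfee μ - durfee l) :=
  durfee_core_cocore_general p hp.pos l κ μ hsc hκ hμ
end

section
/- Let p be an odd prime, let λ be a self-conjugate partition with p-core λ_(p) and p-cocore λ^[p], and let σ be an automorphism of ℚ̄ over ℚ that either is of σ_p-type or fixes every root of unity whose order is coprime to p. Then τ(λ,σ) = τ(λ_(p),σ)·τ(λ^[p],σ). -/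
open scoped BigOperators

/-- The product of the diagonal hook lengths of a partition; the diagonal hook at `(i,i)`
has length `rowLen i + colLen i − 2i − 1`. -/
def diagHookProd (l : YoungDiagram) : ℤ :=
  ∏ c ∈ l.cells.filter (fun c => c.1 = c.2),
    ((l.rowLen c.1 + l.colLen c.1 - 2 * c.1 - 1 : ℕ) : ℤ)

/-- The discriminant `E_λ = (−1)^((n−c)/2)·d₁⋯d_c` attached to a self-conjugate partition
`λ` of `n` with `c` diagonal hooks of lengths `d₁, …, d_c`. -/
def selfConjDisc (l : YoungDiagram) : ℤ :=
  (-1) ^ ((l.cells.card - durfee l) / 2) * diagHookProd l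

/-- A fixed algebraic closure of `ℚ`. -/
abbrev Qbar := AlgebraicClosure ℚ

/-- `σ` is a `σ_p`-type automorphism of `ℚ̄`. -/
def IsSigmaPType (p : ℕ) (σ : Qbar ≃ₐ[ℚ] Qbar) : Prop :=
  (∀ (ζ : Qbar) (n : ℕ), 0 < n → Nat.Coprime n p → ζ ^ n = 1 → σ ζ = ζ ^ p) ∧
  (∀ (ζ : Qbar) (k : ℕ), ζ ^ (p ^ k) = 1 → σ ζ = ζ)


/-!
The discriminant of a self-conjugate partition is the product of the numbers
`D b = (-1) ^ b * (2 * b + 1)` over the arm lengths `b` of its diagonal boxes, that is, over the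
nonnegative positions `b` of its beads on the abacus. Let `g b` be the sign by which `σ` acts on the
square roots of `D b`. Then `g (-1 - b) = g b`, because `D (-1 - b) = D b`. If `p` does not divide
`2 * b + 1`, a Gauss sum computation gives `g b` as the Jacobi symbol of a power of `p` over
`|2 * b + 1|`, and quadratic reciprocity yields `g (b + p) = ε * g b` with `ε` independent of `b`.

A partition is self-conjugate if and only if the reflection `b ↦ -1 - b` exchanges beads and gaps.
The positions at which two self-conjugate partitions differ are therefore stable under the
reflection, so the product of `g` over those that are nonnegative equals the product over the
positions on the runners `r` with `2 * r + 1 < p`, together with the nonnegative positions on the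
middle runner. On the former runners, moving every bead one step changes the product by a power of
`ε`, which makes the contribution of a pair of partitions with the same quotient a function of the
numbers of beads. Those numbers agree for `λ` and its core, and for the cocore and `∅`; comparing
the pair `(λ, cocore)` with the pair `(core, ∅)` gives the theorem.
-/

/-! ### Finite sets and products of signs -/

theorem eq_range_card_of_succ_mem {S : Finset ℕ} (hS : ∀ k, k + 1 ∈ S → k ∈ S) :
    S = Finset.range S.card := by
  refine Finset.eq_of_subset_of_card_le (fun k hk => ?_) (by simp)
  have hle : ∀ i ≤ k, i ∈ S := fun i hi => Nat.decreasingInduction (fun j _ => hS j) hk hi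
  have hsub : Finset.range (k + 1) ⊆ S := fun i hi => hle i (Nat.lt_succ_iff.1 (by simpa using hi))
  simpa using Finset.card_le_card hsub

theorem card_eq_and_image_eq_iff {α β : Type*} [DecidableEq β] (S : Finset α) (J : Finset β)
    (f : α → β) :
    S.card = J.card ∧ S.image f = J ↔
      ∀ b, (S.filter fun a => f a = b).card = if b ∈ J then 1 else 0 := by
  constructor
  · rintro ⟨hcard, rfl⟩ b
    have hinj : Set.InjOn f S := Finset.card_image_iff.1 hcard.symm
    split_ifs with hb
    · obtain ⟨a, ha, rfl⟩ := Finset.mem_image.1 hb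
      refine Finset.card_eq_one.2 ⟨a, Finset.ext fun x => ?_⟩
      simp only [Finset.mem_filter, Finset.mem_singleton]
      exact ⟨fun hx => hinj hx.1 ha hx.2, by rintro rfl; exact ⟨ha, rfl⟩⟩
    · rw [Finset.card_eq_zero, Finset.filter_eq_empty_iff]
      exact fun x hx hxb => hb (hxb ▸ Finset.mem_image_of_mem f hx)
  · intro h
    have himage : S.image f = J := by
      ext b
      rw [← Finset.fiber_nonempty_iff_mem_image, ← Finset.card_pos, h b]
      split_ifs with hb <;> simp [hb]
    refine ⟨?_, himage⟩
    rw [Finset.card_eq_sum_card_image f S, himage, Finset.card_eq_sum_ones]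
    exact Finset.sum_congr rfl fun b hb => by rw [h b, if_pos hb]

theorem prod_mul_prod_eq_prod_symmDiff {α : Type*} [DecidableEq α] (f : α → ℤˣ)
    (A B : Finset α) : (∏ x ∈ A, f x) * ∏ x ∈ B, f x = ∏ x ∈ symmDiff A B, f x := by
  have hsymm : ∏ x ∈ symmDiff A B, f x = (∏ x ∈ A \ B, f x) * ∏ x ∈ B \ A, f x :=
    Finset.prod_union disjoint_sdiff_sdiff
  rw [hsymm, ← Finset.prod_inter_mul_prod_sdiff A B, ← Finset.prod_inter_mul_prod_sdiff B A,
    Finset.inter_comm B A, mul_mul_mul_comm, Int.units_mul_self, one_mul]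

theorem prod_filter_eq_prod_filter_of_involution {α M : Type*} [CommMonoid M] {D : Finset α}
    {ρ : α → α} (hρD : ∀ x ∈ D, ρ x ∈ D) (hρρ : ∀ x ∈ D, ρ (ρ x) = x) {f : α → M}
    (hf : ∀ x ∈ D, f (ρ x) = f x) {H H' : α → Prop} [DecidablePred H] [DecidablePred H']
    (hH : ∀ x ∈ D, H (ρ x) ↔ ¬ H x) (hH' : ∀ x ∈ D, H' (ρ x) ↔ ¬ H' x) :
    ∏ x ∈ D.filter H, f x = ∏ x ∈ D.filter H', f x := by
  refine Finset.prod_bij' (fun x _ => if H' x then x else ρ x) (fun x _ => if H x then x else ρ x)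
    ?_ ?_ ?_ ?_ ?_ <;> grind

theorem disjoint_image_add_range (S : Finset ℕ) (d : ℕ) :
    Disjoint (S.image (· + d)) (Finset.range d) := by
  refine Finset.disjoint_left.2 fun x hx => ?_
  obtain ⟨y, -, rfl⟩ := Finset.mem_image.1 hx
  simp

theorem card_padBeta (S : Finset ℕ) (d : ℕ) : (padBeta S d).card = S.card + d := by
  rw [padBeta, Finset.card_union_of_disjoint (disjoint_image_add_range S d),
    Finset.card_image_of_injective S (add_left_injective d), Finset.card_range]

theorem padBeta_range (n d : ℕ) : padBeta (Finset.range n) d = Finset.range (n + d) := by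
  ext x
  simp only [padBeta, Finset.mem_union, Finset.mem_image, Finset.mem_range]
  exact ⟨by grind, fun hx => (lt_or_ge x d).symm.imp_left fun hd => ⟨x - d, by lia⟩⟩

section Padding

variable {G : ℕ → ℤˣ} {ε : ℤˣ} (hG : ∀ k, G (k + 1) = ε * G k)
include hG

theorem prod_padBeta (S : Finset ℕ) (d : ℕ) :
    ∏ x ∈ padBeta S d, G x = ε ^ (d * S.card) * (∏ x ∈ S, G x) * ∏ x ∈ Finset.range d, G x := by
  have hshift : ∀ x, G (x + d) = ε ^ d * G x := fun x => by
    induction d with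
    | zero => simp
    | succ d ih => rw [← add_assoc, hG, ih, pow_succ', mul_assoc]
  rw [padBeta, Finset.prod_union (disjoint_image_add_range S d),
    Finset.prod_image (add_left_injective d).injOn,
    Finset.prod_congr rfl fun x _ => hshift x, Finset.prod_mul_distrib, Finset.prod_const, pow_mul]

theorem prod_padBeta_mul_prod_range (S : Finset ℕ) (d : ℕ) :
    (∏ x ∈ padBeta S d, G x) * ∏ x ∈ Finset.range (S.card + d), G x =
      (∏ x ∈ S, G x) * ∏ x ∈ Finset.range S.card, G x := by
  rw [← padBeta_range, prod_padBeta hG, prod_padBeta hG, Finset.card_range, mul_mul_mul_comm,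
    Int.units_mul_self, mul_one, mul_mul_mul_comm, Int.units_mul_self, one_mul]

theorem prod_mul_prod_eq_of_padBeta_eq {S T : Finset ℕ} {d e : ℕ}
    (hST : padBeta S d = padBeta T e) :
    (∏ x ∈ S, G x) * ∏ x ∈ T, G x =
      (∏ x ∈ Finset.range S.card, G x) * ∏ x ∈ Finset.range T.card, G x := by
  have hcard : S.card + d = T.card + e := by rw [← card_padBeta, hST, card_padBeta]
  have hnorm := prod_padBeta_mul_prod_range hG S d
  rw [hST, hcard, prod_padBeta_mul_prod_range hG T e] at hnorm
  have hT := Int.units_mul_self (∏ x ∈ Finset.range T.card, G x)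
  calc (∏ x ∈ S, G x) * ∏ x ∈ T, G x
      = (∏ x ∈ S, G x) * ((∏ x ∈ T, G x) * ∏ x ∈ Finset.range T.card, G x) *
          ∏ x ∈ Finset.range T.card, G x := by rw [mul_assoc, mul_assoc, hT, mul_one]
    _ = _ := by
      rw [hnorm, ← mul_assoc, Int.units_mul_self, one_mul]

end Padding

/-! ### Diagonals and Maya diagrams -/

/-- The number of cells of `l` of content `t`, a cell `(i, j)` having content `j - i`. -/
def diagLen (l : YoungDiagram) (t : ℤ) : ℕ :=
  (l.cells.filter fun c => (c.2 : ℤ) - (c.1 : ℤ) = t).card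

/-- The Maya diagram of `l`: the positions `λ_i - i - 1` of the beads on the doubly infinite
abacus of `l`, rows being numbered from `0`. -/
def maya (l : YoungDiagram) : Set ℤ :=
  Set.range fun i : ℕ => (l.rowLen i : ℤ) - i - 1

/-- `(k + (-t)⁺, k + t⁺)` is the `k`-th box of content `t` in the quadrant. -/
theorem mem_iff_lt_diagLen (l : YoungDiagram) (t : ℤ) (k : ℕ) :
    (k + (-t).toNat, k + t.toNat) ∈ l ↔ k < diagLen l t := by
  set S := (l.cells.filter fun c => (c.2 : ℤ) - c.1 = t).image fun c => min c.1 c.2 with hS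
  have hmem : ∀ k, k ∈ S ↔ (k + (-t).toNat, k + t.toNat) ∈ l := fun k => by
    simp only [hS, Finset.mem_image, Finset.mem_filter, YoungDiagram.mem_cells, Prod.exists]
    refine ⟨?_, fun h => ⟨_, _, ⟨h, by lia⟩, by lia⟩⟩
    rintro ⟨i, j, ⟨hij, rfl⟩, rfl⟩
    convert hij using 2 <;> lia
  have hcard : S.card = diagLen l t := by
    refine Finset.card_image_of_injOn fun c hc d hd hcd => ?_
    have hc' := (Finset.mem_filter.1 hc).2
    have hd' := (Finset.mem_filter.1 hd).2
    change min c.1 c.2 = min d.1 d.2 at hcd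
    exact Prod.ext (by lia) (by lia)
  have hrange : S = Finset.range S.card :=
    eq_range_card_of_succ_mem fun k hk => (hmem k).2 <|
      l.up_left_mem (by lia) (by lia) ((hmem (k + 1)).1 hk)
  rw [← hmem, ← hcard, ← Finset.mem_range, ← hrange]

theorem mem_iff_min_lt_diagLen (l : YoungDiagram) (i j : ℕ) :
    (i, j) ∈ l ↔ min i j < diagLen l ((j : ℤ) - i) := by
  rw [← mem_iff_lt_diagLen]
  convert Iff.rfl using 3 <;> lia

theorem cells_subset_iff_diagLen_le {l m : YoungDiagram} :
    m.cells ⊆ l.cells ↔ ∀ t, diagLen m t ≤ diagLen l t := by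
  refine ⟨fun h t => Finset.card_le_card (Finset.filter_subset_filter _ h), fun h c hc => ?_⟩
  rw [YoungDiagram.mem_cells, mem_iff_min_lt_diagLen] at hc ⊢
  exact hc.trans_le (h _)

theorem diagLen_transpose (l : YoungDiagram) (t : ℤ) :
    diagLen l.transpose t = diagLen l (-t) := by
  refine Finset.card_nbij' Prod.swap Prod.swap ?_ ?_ (fun _ _ => rfl) (fun _ _ => rfl) <;>
  · rintro ⟨i, j⟩ h
    simp only [Finset.coe_filter, YoungDiagram.mem_cells, Set.mem_ofPred_eq, Prod.swap_prod_mk,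
      YoungDiagram.mem_transpose] at h ⊢
    exact ⟨h.1, by lia⟩

theorem diagLen_le_of_nonneg (l : YoungDiagram) {s t : ℤ} (hs : 0 ≤ s) (hst : s ≤ t) :
    diagLen l t ≤ diagLen l s := by
  refine le_of_forall_lt fun k hk => ?_
  rw [← mem_iff_lt_diagLen] at hk ⊢
  exact l.up_left_mem (by lia) (by lia) hk

theorem diagLen_le_of_nonpos (l : YoungDiagram) {s t : ℤ} (hst : s ≤ t) (ht : t ≤ 0) :
    diagLen l s ≤ diagLen l t := by
  have h := diagLen_le_of_nonneg l.transpose (neg_nonneg.2 ht) (neg_le_neg hst)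
  simpa only [diagLen_transpose, neg_neg] using h

theorem lt_diagLen_add_toNat_iff (l : YoungDiagram) (t : ℤ) (i : ℕ) :
    i < diagLen l t + (-t).toNat ↔ t < (l.rowLen i : ℤ) - i := by
  rcases lt_or_ge ((i : ℤ) + t) 0 with hneg | hpos
  · lia
  · have h := mem_iff_lt_diagLen l t (i - (-t).toNat)
    rw [YoungDiagram.mem_iff_lt_rowLen, Nat.sub_add_cancel (by lia)] at h
    lia

open scoped Classical in
/-- The boundary path of `l` passes from content `t` to content `t + 1` by a vertical step exactly
when `t` carries a bead. -/
theorem diagLen_add_ite (l : YoungDiagram) (t : ℤ) :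
    diagLen l t + (if t < 0 then 1 else 0) =
      diagLen l (t + 1) + (if t ∈ maya l then 1 else 0) := by
  have hlt := lt_diagLen_add_toNat_iff l t
  have hlt' := lt_diagLen_add_toNat_iff l (t + 1)
  by_cases ht : t ∈ maya l
  · obtain ⟨i, hi : (l.rowLen i : ℤ) - i - 1 = t⟩ := ht
    have htm : t ∈ maya l := ⟨i, hi⟩
    rw [if_pos htm]
    have hsucc := l.rowLen_anti i (i + 1) (Nat.le_succ i)
    have hpred := l.rowLen_anti (i - 1) i (Nat.sub_le i 1)
    have h1 := hlt i
    have h2 := hlt (i + 1)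
    have h3 := hlt' i
    have h4 := hlt' (i - 1)
    have hi' : diagLen l t + (-t).toNat = i + 1 := by lia
    have hi'' : diagLen l (t + 1) + (-(t + 1)).toNat = i := by lia
    split_ifs <;> lia
  · rw [if_neg ht]
    have heq : diagLen l t + (-t).toNat = diagLen l (t + 1) + (-(t + 1)).toNat :=
      eq_of_forall_lt_iff fun i => by
        have hi : (l.rowLen i : ℤ) - i - 1 ≠ t := fun h => ht ⟨i, h⟩
        rw [hlt, hlt']
        lia
    split_ifs <;> lia

theorem mem_maya_transpose (l : YoungDiagram) (z : ℤ) :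
    z ∈ maya l.transpose ↔ -1 - z ∉ maya l := by
  classical
  have h := diagLen_add_ite l.transpose z
  have h' := diagLen_add_ite l (-1 - z)
  rw [diagLen_transpose, diagLen_transpose] at h
  rw [show -1 - z + 1 = -z by ring, show -1 - z = -(z + 1) by ring] at h'
  rw [show -1 - z = -(z + 1) by ring]
  grind

theorem rowLen_eq_zero_of_colLen_le {l : YoungDiagram} {i : ℕ} (hi : l.colLen 0 ≤ i) :
    l.rowLen i = 0 := by
  by_contra h
  exact hi.not_gt <| YoungDiagram.mem_iff_lt_colLen.1 <|
    YoungDiagram.mem_iff_lt_rowLen.2 <| Nat.pos_of_ne_zero h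

theorem mem_maya_of_lt {l : YoungDiagram} {z : ℤ} (hz : z < -l.colLen 0) : z ∈ maya l := by
  have hrow : l.rowLen (-z - 1).toNat = 0 := rowLen_eq_zero_of_colLen_le (by lia)
  exact ⟨(-z - 1).toNat, by simp only [hrow]; lia⟩

theorem colLen_bot (j : ℕ) : (⊥ : YoungDiagram).colLen j = 0 := by
  by_contra h
  exact YoungDiagram.notMem_bot _ (YoungDiagram.mem_iff_lt_colLen.2 (Nat.pos_of_ne_zero h))

theorem transpose_bot : (⊥ : YoungDiagram).transpose = ⊥ :=
  YoungDiagram.ext (Finset.ext fun _ => by simp [YoungDiagram.mem_transpose])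

theorem mem_maya_bot {z : ℤ} : z ∈ maya ⊥ ↔ z < 0 := by
  classical
  have hdiag (t : ℤ) : diagLen ⊥ t = 0 := by simp [diagLen]
  have h := diagLen_add_ite ⊥ z
  rw [hdiag, hdiag] at h
  grind

theorem strictAnti_rowLen_sub (l : YoungDiagram) :
    StrictAnti fun i : ℕ => (l.rowLen i : ℤ) - i - 1 := fun i j hij => by
  have := l.rowLen_anti i j hij.le
  lia

theorem maya_injective : Function.Injective maya := by
  intro l m hlm
  have hrow := ((strictAnti_rowLen_sub l).dual_right.range_inj
    (strictAnti_rowLen_sub m).dual_right).1 hlm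
  refine YoungDiagram.ext (Finset.ext fun c => ?_)
  have hc : (l.rowLen c.1 : ℤ) - c.1 - 1 = m.rowLen c.1 - c.1 - 1 := congrFun hrow c.1
  rw [YoungDiagram.mem_cells, YoungDiagram.mem_cells, YoungDiagram.mem_iff_lt_rowLen,
    YoungDiagram.mem_iff_lt_rowLen]
  lia

theorem transpose_eq_self_iff (l : YoungDiagram) :
    l.transpose = l ↔ ∀ z, z ∈ maya l ↔ -1 - z ∉ maya l := by
  rw [← maya_injective.eq_iff, Set.ext_iff]
  simp only [mem_maya_transpose]
  exact forall_congr' fun z => Iff.comm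

/-! ### Rim hooks -/

theorem isRimHookRemoval_iff_diagLen {p : ℕ} {l m : YoungDiagram} :
    IsRimHookRemoval p l m ↔
      ∃ s : ℤ, ∀ t, diagLen l t = diagLen m t + if s < t ∧ t ≤ s + p then 1 else 0 := by
  have hcard (s : ℤ) : ((Finset.range p).image fun k : ℕ => s + (k : ℤ)).card = p := by
    rw [Finset.card_image_of_injective _ fun a b h => by simpa using h, Finset.card_range]
  have hmem (s t : ℤ) :
      t ∈ ((Finset.range p).image fun k : ℕ => s + (k : ℤ)) ↔ s - 1 < t ∧ t ≤ s - 1 + p := by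
    simp only [Finset.mem_image, Finset.mem_range]
    exact ⟨by rintro ⟨k, hk, rfl⟩; lia, fun h => ⟨(t - s).toNat, by lia, by lia⟩⟩
  have hdiff (hml : m.cells ⊆ l.cells) (t : ℤ) :
      diagLen l t = diagLen m t +
        ((l.cells \ m.cells).filter fun c => (c.2 : ℤ) - (c.1 : ℤ) = t).card := by
    rw [diagLen, diagLen, ← Finset.card_union_of_disjoint
      (Finset.disjoint_filter_filter Finset.disjoint_sdiff), ← Finset.filter_union,
      Finset.union_sdiff_of_subset hml]
  constructor
  · rintro ⟨hml, hp, s, hs⟩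
    refine ⟨s - 1, fun t => ?_⟩
    rw [hdiff hml, (card_eq_and_image_eq_iff _ _ _).1 ⟨hp.trans (hcard s).symm, hs⟩ t]
    simp only [hmem]
  · rintro ⟨s, hs⟩
    obtain ⟨s, rfl⟩ : ∃ s', s = s' - 1 := ⟨s + 1, by ring⟩
    have hml : m.cells ⊆ l.cells := cells_subset_iff_diagLen_le.2 fun t => by have := hs t; lia
    have h := (card_eq_and_image_eq_iff (l.cells \ m.cells)
      ((Finset.range p).image fun k : ℕ => s + (k : ℤ))
      fun c : ℕ × ℕ => (c.2 : ℤ) - (c.1 : ℤ)).2 fun t => by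
        rw [← Nat.add_left_cancel_iff, ← hdiff hml t, hs t]
        simp only [hmem]
    exact ⟨hml, h.1.trans (hcard s), s, h.2⟩

theorem IsRimHookRemoval.exists_maya {p : ℕ} (hp : 0 < p) {l m : YoungDiagram}
    (h : IsRimHookRemoval p l m) :
    ∃ s, s ∉ maya l ∧ s + p ∈ maya l ∧
      ∀ z, z ∈ maya m ↔ z = s ∨ z ∈ maya l ∧ z ≠ s + p := by
  classical
  obtain ⟨s, hs⟩ := isRimHookRemoval_iff_diagLen.1 h
  have key (z : ℤ) : (if z ∈ maya m then 1 else 0) + (if z = s + p then 1 else 0) =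
      (if z ∈ maya l then 1 else 0) + if z = s then 1 else 0 := by
    have h1 := hs z
    have h2 := hs (z + 1)
    have h3 := diagLen_add_ite l z
    have h4 := diagLen_add_ite m z
    grind
  have hs1 := key s
  have hs2 := key (s + p)
  refine ⟨s, by grind, by grind, fun z => ?_⟩
  have hz := key z
  grind

theorem exists_diagLen_eq {l : YoungDiagram} {f : ℤ → ℕ} (hle : ∀ t, f t ≤ diagLen l t)
    (hpos : ∀ t, 0 ≤ t → f (t + 1) ≤ f t ∧ f t ≤ f (t + 1) + 1)
    (hneg : ∀ t < 0, f t ≤ f (t + 1) ∧ f (t + 1) ≤ f t + 1) :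
    ∃ m : YoungDiagram, ∀ t, diagLen m t = f t := by
  have hrow (i j : ℕ) (h : min i (j + 1) < f ((j + 1 : ℕ) - i)) : min i j < f ((j : ℤ) - i) := by
    rw [show ((j + 1 : ℕ) : ℤ) - i = (j : ℤ) - i + 1 by lia] at h
    have h1 := hpos ((j : ℤ) - i)
    have h2 := hneg ((j : ℤ) - i)
    lia
  have hcol (i j : ℕ) (h : min (i + 1) j < f (j - (i + 1 : ℕ))) : min i j < f ((j : ℤ) - i) := by
    rw [show (j : ℤ) - i = (j : ℤ) - (i + 1 : ℕ) + 1 by lia]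
    have h1 := hpos ((j : ℤ) - (i + 1 : ℕ))
    have h2 := hneg ((j : ℤ) - (i + 1 : ℕ))
    lia
  have hlower : IsLowerSet {c : ℕ × ℕ | min c.1 c.2 < f ((c.2 : ℤ) - c.1)} := by
    rintro ⟨i', j'⟩ ⟨i, j⟩ ⟨hi : i ≤ i', hj : j ≤ j'⟩ h
    refine Nat.decreasingInduction (motive := fun i _ => min i j < f ((j : ℤ) - i))
      (fun i _ => hcol i j) ?_ hi
    exact Nat.decreasingInduction (motive := fun j _ => min i' j < f ((j : ℤ) - i'))
      (fun j _ => hrow i' j) h hj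
  let m : YoungDiagram :=
    { cells := l.cells.filter fun c => min c.1 c.2 < f ((c.2 : ℤ) - c.1)
      isLowerSet := by
        rw [Finset.coe_filter]
        exact l.isLowerSet.inter hlower }
  refine ⟨m, fun t => eq_of_forall_lt_iff fun k => ?_⟩
  have hm : (k + (-t).toNat, k + t.toNat) ∈ m ↔ k < diagLen l t ∧ k < f t := by
    rw [← YoungDiagram.mem_cells, Finset.mem_filter, YoungDiagram.mem_cells, mem_iff_lt_diagLen]
    convert Iff.rfl using 4 <;> lia
  rw [← mem_iff_lt_diagLen, hm]
  exact ⟨And.right, fun h => ⟨h.trans_le (hle t), h⟩⟩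

theorem exists_isRimHookRemoval_s19 {l : YoungDiagram} {p : ℕ} {s : ℤ} (hs : s ∉ maya l)
    (hsp : s + p ∈ maya l) : ∃ m, IsRimHookRemoval p l m := by
  classical
  have hstep := diagLen_add_ite l
  have hstep_s := hstep s
  have hstep_sp := hstep (s + p)
  rw [if_neg hs] at hstep_s
  rw [if_pos hsp] at hstep_sp
  have hwindow (t : ℤ) (h1 : s < t) (h2 : t ≤ s + p) : 1 ≤ diagLen l t := by
    rcases le_or_gt t 0 with ht | ht
    · have := diagLen_le_of_nonpos l (Int.add_one_le_iff.2 h1) ht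
      grind
    · have := diagLen_le_of_nonneg l ht.le h2
      grind
  obtain ⟨f, hf⟩ : ∃ f : ℤ → ℕ, ∀ t, diagLen l t = f t + if s < t ∧ t ≤ s + p then 1 else 0 :=
    ⟨fun t => diagLen l t - if s < t ∧ t ≤ s + p then 1 else 0, fun t => by
      have := hwindow t
      split_ifs <;> lia⟩
  have hfstep (t : ℤ) : f t + (if t < 0 then 1 else 0) + (if t = s + p then 1 else 0) =
      f (t + 1) + (if t ∈ maya l then 1 else 0) + if t = s then 1 else 0 := by
    have h := hstep t
    have h1 := hf t
    have h2 := hf (t + 1)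
    grind
  obtain ⟨m, hm⟩ := exists_diagLen_eq (l := l) (f := f)
    (fun t => by have := hf t; lia)
    (fun t ht => by have := hfstep t; grind)
    (fun t ht => by have := hfstep t; grind)
  exact ⟨m, isRimHookRemoval_iff_diagLen.2 ⟨s, fun t => by rw [hm, hf]⟩⟩

theorem IsPCore.mem_maya_of_add_mem {p : ℕ} {κ : YoungDiagram} (hκ : IsPCore p κ) {s : ℤ}
    (h : s + p ∈ maya κ) : s ∈ maya κ := by
  by_contra hs
  obtain ⟨m, hm⟩ := exists_isRimHookRemoval_s19 hs h
  exact hκ m hm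

/-! ### β-sets and runners -/

theorem mem_betaSet {l : YoungDiagram} {N x : ℕ} (hN : l.colLen 0 ≤ N) :
    x ∈ betaSet l N ↔ (x : ℤ) - N ∈ maya l := by
  simp only [betaSet, maya, Finset.mem_image, Finset.mem_range, Set.mem_range]
  refine ⟨?_, ?_⟩ <;> rintro ⟨i, h⟩
  · exact ⟨i, by lia⟩
  · have hi : i < N := by
      by_contra hi
      have hrow : l.rowLen i = 0 := rowLen_eq_zero_of_colLen_le (by lia)
      lia
    exact ⟨i, hi, by lia⟩

theorem mem_runnerSet {p r k : ℕ} (hr : r < p) {A : Finset ℕ} :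
    k ∈ runnerSet p r A ↔ p * k + r ∈ A := by
  simp only [runnerSet, Finset.mem_image, Finset.mem_filter]
  constructor
  · rintro ⟨x, ⟨hx, rfl⟩, rfl⟩
    rwa [Nat.div_add_mod]
  · exact fun h => ⟨p * k + r, ⟨h, by simp [Nat.mod_eq_of_lt hr]⟩,
      by rw [Nat.mul_add_div (by lia), Nat.div_eq_of_lt hr, add_zero]⟩

theorem card_runnerSet (p r : ℕ) (A : Finset ℕ) :
    (runnerSet p r A).card = (A.filter fun x => x % p = r).card := by
  refine Finset.card_image_of_injOn fun x hx y hy (hxy : x / p = y / p) => ?_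
  rw [← Nat.div_add_mod x p, ← Nat.div_add_mod y p, hxy, (Finset.mem_filter.1 hx).2,
    (Finset.mem_filter.1 hy).2]

/-- The number of beads on runner `r` of the `p`-abacus of `l` drawn with `p * K` beads. -/
def runnerCount (p K r : ℕ) (l : YoungDiagram) : ℕ :=
  (runnerSet p r (betaSet l (p * K))).card

section RunnerMembership

variable {p K r : ℕ} {l m : YoungDiagram} (hl : l.colLen 0 ≤ p * K) (hr : r < p)
include hl hr

theorem mem_runnerSet_betaSet {k : ℕ} :
    k ∈ runnerSet p r (betaSet l (p * K)) ↔ (p : ℤ) * (k - K) + r ∈ maya l := by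
  rw [mem_runnerSet hr, mem_betaSet hl]
  push_cast
  rw [show (p : ℤ) * k + r - p * K = p * (k - K) + r by ring]

theorem runner_mem_maya_of_lt {k : ℤ} (hk : k < -K) : (p : ℤ) * k + r ∈ maya l := by
  refine mem_maya_of_lt ?_
  have hle : (p : ℤ) * (k + 1) ≤ p * (-K) := mul_le_mul_of_nonneg_left hk (by lia)
  zify at hl hr
  linarith

theorem mem_padBeta_runnerSet_betaSet {d w : ℕ} :
    w ∈ padBeta (runnerSet p r (betaSet l (p * K))) d ↔ (p : ℤ) * (w - d - K) + r ∈ maya l := by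
  simp only [padBeta, Finset.mem_union, Finset.mem_image, Finset.mem_range]
  rcases lt_or_ge w d with hw | hw
  · exact iff_of_true (Or.inr hw) (runner_mem_maya_of_lt hl hr (by lia))
  · obtain ⟨k, rfl⟩ := Nat.exists_eq_add_of_le' hw
    simp [← mem_runnerSet_betaSet hl hr]

theorem runner_mem_maya_iff_of_padBeta_eq (hm : m.colLen 0 ≤ p * K) {d e : ℕ}
    (h : padBeta (runnerSet p r (betaSet l (p * K))) d =
      padBeta (runnerSet p r (betaSet m (p * K))) e) (k : ℤ) :
    (p : ℤ) * k + r ∈ maya m ↔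
      (p : ℤ) * (k + runnerCount p K r l - runnerCount p K r m) + r ∈ maya l := by
  have hcard : runnerCount p K r l + d = runnerCount p K r m + e := by
    rw [runnerCount, runnerCount, ← card_padBeta, h, card_padBeta]
  rcases lt_or_ge (k + K + e) 0 with hk | hk
  · exact iff_of_true (runner_mem_maya_of_lt hm hr (by lia))
      (runner_mem_maya_of_lt hl hr (by lia))
  · have hl' := mem_padBeta_runnerSet_betaSet hl hr (d := d) (w := (k + K + e).toNat)
    have hm' := mem_padBeta_runnerSet_betaSet hm hr (d := e) (w := (k + K + e).toNat)
    rw [h, hm', Int.toNat_of_nonneg hk] at hl'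
    convert hl' using 4 <;> lia

end RunnerMembership

theorem runnerSet_betaSet_bot {p r : ℕ} (hr : r < p) (K : ℕ) :
    runnerSet p r (betaSet ⊥ (p * K)) = Finset.range K := by
  ext k
  rw [mem_runnerSet_betaSet (by simp [colLen_bot]) hr, mem_maya_bot, Finset.mem_range]
  have hp : (0 : ℤ) < p := by lia
  constructor <;> intro h
  · by_contra hk
    have : 0 ≤ (p : ℤ) * (k - K) := mul_nonneg hp.le (by lia)
    lia
  · have : (p : ℤ) * (k - K + 1) ≤ 0 := mul_nonpos_of_nonneg_of_nonpos hp.le (by lia)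
    lia

theorem runnerCount_bot {p r : ℕ} (hr : r < p) (K : ℕ) : runnerCount p K r ⊥ = K := by
  rw [runnerCount, runnerSet_betaSet_bot hr, Finset.card_range]

/-! ### Cores and cocores -/

theorem IsRimHookRemoval.colLen_le {p : ℕ} {l m : YoungDiagram} (h : IsRimHookRemoval p l m)
    (j : ℕ) : m.colLen j ≤ l.colLen j :=
  le_of_forall_lt fun _ hi => YoungDiagram.mem_iff_lt_colLen.1 <|
    h.1 (YoungDiagram.mem_iff_lt_colLen.2 hi)

theorem colLen_le_of_reflTransGen {p : ℕ} {l m : YoungDiagram}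
    (h : Relation.ReflTransGen (IsRimHookRemoval p) l m) (j : ℕ) : m.colLen j ≤ l.colLen j := by
  induction h with
  | refl => exact le_rfl
  | tail _ hstep ih => exact (hstep.colLen_le j).trans ih

theorem IsRimHookRemoval.exists_betaSet_eq {p N : ℕ} (hp : 0 < p) {l m : YoungDiagram}
    (hl : l.colLen 0 ≤ N) (h : IsRimHookRemoval p l m) :
    ∃ x, x ∉ betaSet l N ∧ x + p ∈ betaSet l N ∧
      betaSet m N = insert x ((betaSet l N).erase (x + p)) := by
  obtain ⟨s, hs, hsp, hm⟩ := h.exists_maya hp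
  have hsN : 0 ≤ s + N := by
    by_contra hneg
    exact hs (mem_maya_of_lt (by lia))
  obtain ⟨x, hx⟩ := Int.eq_ofNat_of_zero_le hsN
  obtain rfl : s = x - N := by lia
  refine ⟨x, by rwa [mem_betaSet hl], ?_, Finset.ext fun y => ?_⟩
  · rw [mem_betaSet hl]
    convert hsp using 1
    lia
  · rw [mem_betaSet ((h.colLen_le 0).trans hl), hm, Finset.mem_insert, Finset.mem_erase,
      mem_betaSet hl]
    lia

theorem IsRimHookRemoval.runnerCount_eq {p K : ℕ} (hp : 0 < p) {l m : YoungDiagram}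
    (hl : l.colLen 0 ≤ p * K) (h : IsRimHookRemoval p l m) (r : ℕ) :
    runnerCount p K r m = runnerCount p K r l := by
  obtain ⟨x, hx, hxp, hm⟩ := h.exists_betaSet_eq hp hl
  rw [runnerCount, runnerCount, card_runnerSet, card_runnerSet, hm, Finset.filter_insert,
    Finset.filter_erase]
  split_ifs with hr
  · have hmem : x + p ∈ (betaSet l (p * K)).filter (· % p = r) := by simp [hxp, hr]
    rw [Finset.card_insert_of_notMem (by simp [hx]), Finset.card_erase_add_one hmem]
  · rw [Finset.erase_eq_of_notMem (by simp [hr])]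

theorem runnerCount_eq_of_reflTransGen {p K : ℕ} (hp : 0 < p) {l m : YoungDiagram}
    (hl : l.colLen 0 ≤ p * K) (h : Relation.ReflTransGen (IsRimHookRemoval p) l m) (r : ℕ) :
    runnerCount p K r m = runnerCount p K r l := by
  induction h with
  | refl => rfl
  | tail hlm hstep ih =>
    rw [hstep.runnerCount_eq hp ((colLen_le_of_reflTransGen hlm 0).trans hl), ih]

theorem HasEmptyPCore.runnerCount_eq {p K r : ℕ} {μ : YoungDiagram} (hμ : HasEmptyPCore p μ)
    (hμK : μ.colLen 0 ≤ p * K) (hr : r < p) : runnerCount p K r μ = K := by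
  rw [← runnerCount_eq_of_reflTransGen (by lia) hμK hμ, runnerCount_bot hr]

theorem IsPCore.runnerSet_eq {p r : ℕ} {κ : YoungDiagram} (hκ : IsPCore p κ) {K : ℕ}
    (hκK : κ.colLen 0 ≤ p * K) (hr : r < p) :
    runnerSet p r (betaSet κ (p * K)) = Finset.range (runnerCount p K r κ) := by
  refine eq_range_card_of_succ_mem fun k hk => ?_
  rw [mem_runnerSet_betaSet hκK hr] at hk ⊢
  refine hκ.mem_maya_of_add_mem ?_
  convert hk using 1
  push_cast
  ring

theorem IsPCore.runner_mem_maya_iff {p r : ℕ} {κ : YoungDiagram} (hκ : IsPCore p κ) {K : ℕ}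
    (hκK : κ.colLen 0 ≤ p * K) (hr : r < p) (k : ℤ) :
    (p : ℤ) * k + r ∈ maya κ ↔ k + K < runnerCount p K r κ := by
  rcases lt_or_ge (k + K) 0 with hk | hk
  · exact iff_of_true (runner_mem_maya_of_lt hκK hr (by lia)) (by lia)
  · obtain ⟨n, hn⟩ := Int.eq_ofNat_of_zero_le hk
    obtain rfl : k = n - K := by lia
    rw [← mem_runnerSet_betaSet hκK hr, hκ.runnerSet_eq hκK hr, Finset.mem_range]
    lia

theorem transpose_eq_self_iff_runner {p : ℕ} (hp : 0 < p) (l : YoungDiagram) :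
    l.transpose = l ↔ ∀ r < p, ∀ k : ℤ,
      (p : ℤ) * k + r ∈ maya l ↔ (p : ℤ) * (-1 - k) + (p - 1 - r : ℕ) ∉ maya l := by
  have hreflect {r : ℕ} (hr : r < p) (k : ℤ) :
      (p : ℤ) * (-1 - k) + (p - 1 - r : ℕ) = -1 - (p * k + r) := by
    push_cast [Nat.sub_sub, Nat.cast_sub (show 1 + r ≤ p by lia)]
    ring
  rw [transpose_eq_self_iff]
  refine ⟨fun h r hr k => by rw [hreflect hr, h], fun h z => ?_⟩
  have hr : z % p < p := Int.emod_lt_of_pos z (by lia)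
  have hr0 : 0 ≤ z % p := Int.emod_nonneg z (by lia)
  have hz : (p : ℤ) * (z / p) + (z % p).toNat = z := by
    rw [Int.toNat_of_nonneg hr0, Int.mul_ediv_add_emod]
  have := h (z % p).toNat (by lia) (z / p)
  rwa [hreflect (by lia), hz] at this

theorem runnerCount_add_runnerCount {p K r : ℕ} {l : YoungDiagram} (hl : l.colLen 0 ≤ p * K)
    (hsc : l.transpose = l) (hr : r < p) :
    runnerCount p K r l + runnerCount p K (p - 1 - r) l = 2 * K := by
  have hsymm := (transpose_eq_self_iff_runner (Nat.zero_lt_of_lt hr) l).1 hsc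
  have hr' : p - 1 - r < p := by lia
  have hmem (k : ℕ) (hk : k < 2 * K) : k ∈ runnerSet p r (betaSet l (p * K)) ↔
      2 * K - 1 - k ∉ runnerSet p (p - 1 - r) (betaSet l (p * K)) := by
    rw [mem_runnerSet_betaSet hl hr, mem_runnerSet_betaSet hl hr', hsymm r hr]
    rw [show (-1 - ((k : ℤ) - K)) = ((2 * K - 1 - k : ℕ) : ℤ) - K by lia]
  have hlt {q k : ℕ} (hq : q < p) (hk : k ∈ runnerSet p q (betaSet l (p * K))) : k < 2 * K := by
    by_contra h
    rw [mem_runnerSet_betaSet hl hq, hsymm q hq] at hk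
    exact hk (runner_mem_maya_of_lt hl (by lia) (by lia))
  have hcompl : (Finset.range (2 * K) \ runnerSet p r (betaSet l (p * K))).card =
      runnerCount p K (p - 1 - r) l := by
    refine Finset.card_nbij' (2 * K - 1 - ·) (2 * K - 1 - ·) (fun k hk => ?_) (fun k hk => ?_)
      (fun k hk => ?_) fun k hk => ?_
    · obtain ⟨hk, hkr⟩ := Finset.mem_sdiff.1 hk
      exact not_not.1 (mt (hmem k (Finset.mem_range.1 hk)).2 hkr)
    · have hk2 := hlt hr' hk
      have hiff := hmem (2 * K - 1 - k) (by lia)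
      rw [show 2 * K - 1 - (2 * K - 1 - k) = k by lia] at hiff
      exact Finset.mem_sdiff.2 ⟨Finset.mem_range.2 (by lia), fun h => hiff.1 h hk⟩
    · have := Finset.mem_range.1 (Finset.mem_sdiff.1 hk).1
      lia
    · have := hlt hr' hk
      lia
  rw [← hcompl, runnerCount, add_comm, Finset.card_sdiff_add_card_eq_card, Finset.card_range]
  exact fun k hk => Finset.mem_range.2 (hlt hr hk)

theorem IsPCoreOf.transpose_eq_self {p : ℕ} (hp : 0 < p) {l κ : YoungDiagram}
    (hκ : IsPCoreOf p l κ) (hsc : l.transpose = l) : κ.transpose = κ := by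
  obtain ⟨hlκ, hcore⟩ := hκ
  have hl : l.colLen 0 ≤ p * l.colLen 0 := Nat.le_mul_of_pos_left _ hp
  have hκl := (colLen_le_of_reflTransGen hlκ 0).trans hl
  refine (transpose_eq_self_iff_runner hp κ).2 fun r hr k => ?_
  rw [hcore.runner_mem_maya_iff hκl hr, hcore.runner_mem_maya_iff hκl (by lia),
    runnerCount_eq_of_reflTransGen hp hl hlκ, runnerCount_eq_of_reflTransGen hp hl hlκ]
  have := runnerCount_add_runnerCount hl hsc hr
  lia

theorem IsPCocoreOf.transpose_eq_self {p : ℕ} (hp : 0 < p) {l μ : YoungDiagram}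
    (hμ : IsPCocoreOf p l μ) (hsc : l.transpose = l) : μ.transpose = μ := by
  obtain ⟨hempty, N, hl, hm, ⟨K, rfl⟩, hpad⟩ := hμ
  have hmaya {r : ℕ} (hr : r < p) (k : ℤ) :
      (p : ℤ) * k + r ∈ maya μ ↔ (p : ℤ) * (k + runnerCount p K r l - K) + r ∈ maya l := by
    obtain ⟨d, e, h⟩ := hpad r hr
    rw [runner_mem_maya_iff_of_padBeta_eq hl hr hm h, hempty.runnerCount_eq hm hr]
  refine (transpose_eq_self_iff_runner hp μ).2 fun r hr k => ?_
  have hcount := runnerCount_add_runnerCount hl hsc hr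
  rw [hmaya hr, hmaya (by lia), (transpose_eq_self_iff_runner hp l).1 hsc r hr]
  convert Iff.rfl using 5
  lia

/-! ### Products over arm lengths -/

/-- The product of `g` over the arm lengths `λ_i - i - 1` of the diagonal cells of `l`. When `l` is
self-conjugate, its diagonal hook lengths are the numbers `2 * a + 1` for these arm lengths `a`. -/
def armProd {M : Type*} [CommMonoid M] (g : ℤ → M) (l : YoungDiagram) : M :=
  ∏ c ∈ l.cells.filter fun c => c.1 = c.2, g ((l.rowLen c.1 : ℤ) - c.1 - 1)

theorem armProd_bot {M : Type*} [CommMonoid M] (g : ℤ → M) : armProd g ⊥ = 1 := by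
  simp [armProd]

theorem armProd_eq_prod_betaSet {M : Type*} [CommMonoid M] (g : ℤ → M) {l : YoungDiagram} {N : ℕ}
    (hN : l.colLen 0 ≤ N) :
    armProd g l = ∏ x ∈ (betaSet l N).filter (N ≤ ·), g ((x : ℤ) - N) := by
  have hrow {i : ℕ} (hi : i < l.rowLen i) : i < N := by
    by_contra h
    have := rowLen_eq_zero_of_colLen_le (l := l) (i := i) (by lia)
    lia
  have hmem (c : ℕ × ℕ) :
      c ∈ l.cells.filter (fun c => c.1 = c.2) ↔ c.1 = c.2 ∧ c.1 < l.rowLen c.1 := by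
    obtain ⟨i, j⟩ := c
    simp only [Finset.mem_filter, YoungDiagram.mem_cells, YoungDiagram.mem_iff_lt_rowLen]
    lia
  refine Finset.prod_bij (fun c _ => l.rowLen c.1 + (N - 1 - c.1)) (fun c hc => ?_)
    (fun c hc d hd hcd => ?_) (fun x hx => ?_) fun c hc => ?_
  · obtain ⟨-, hc⟩ := (hmem c).1 hc
    have hcN := hrow hc
    exact Finset.mem_filter.2 ⟨Finset.mem_image_of_mem _ (Finset.mem_range.2 hcN), by lia⟩
  · obtain ⟨hc1, hc⟩ := (hmem c).1 hc
    obtain ⟨hd1, hd⟩ := (hmem d).1 hd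
    have hcN := hrow hc
    have hdN := hrow hd
    have hcd1 : c.1 = d.1 := (strictAnti_rowLen_sub l).injective (by lia)
    exact Prod.ext hcd1 (by lia)
  · obtain ⟨hx, hNx⟩ := Finset.mem_filter.1 hx
    obtain ⟨i, hi, rfl⟩ := Finset.mem_image.1 hx
    have hiN := Finset.mem_range.1 hi
    exact ⟨(i, i), (hmem _).2 ⟨rfl, by lia⟩, rfl⟩
  · obtain ⟨-, hc⟩ := (hmem c).1 hc
    have hcN := hrow hc
    congr 1
    lia

theorem lt_two_mul_of_mem_betaSet {l : YoungDiagram} {N x : ℕ} (hN : l.colLen 0 ≤ N)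
    (hsc : l.transpose = l) (hx : x ∈ betaSet l N) : x < 2 * N := by
  rw [mem_betaSet hN, (transpose_eq_self_iff l).1 hsc] at hx
  by_contra h
  exact hx (mem_maya_of_lt (by lia))

theorem mem_betaSet_iff_reflect_notMem {l : YoungDiagram} {N x : ℕ} (hN : l.colLen 0 ≤ N)
    (hsc : l.transpose = l) (hx : x < 2 * N) :
    x ∈ betaSet l N ↔ 2 * N - 1 - x ∉ betaSet l N := by
  rw [mem_betaSet hN, mem_betaSet hN, (transpose_eq_self_iff l).1 hsc]
  rw [show -1 - ((x : ℤ) - N) = ((2 * N - 1 - x : ℕ) : ℤ) - N by lia]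

/-- The beads of exactly one of two self-conjugate partitions are permuted by `z ↦ -1 - z`, so the
nonnegative half-line can be traded for any other fundamental domain of this reflection. -/
theorem armProd_mul_armProd {g : ℤ → ℤˣ} (hg : ∀ b, g (-1 - b) = g b) {l m : YoungDiagram}
    {N : ℕ} (hl : l.colLen 0 ≤ N) (hm : m.colLen 0 ≤ N) (hlsc : l.transpose = l)
    (hmsc : m.transpose = m) {H : ℤ → Prop} [DecidablePred H] (hH : ∀ z, H (-1 - z) ↔ ¬ H z) :
    armProd g l * armProd g m =
      (∏ x ∈ (betaSet l N).filter fun x : ℕ => H ((x : ℤ) - N), g ((x : ℤ) - N)) *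
        ∏ x ∈ (betaSet m N).filter fun x : ℕ => H ((x : ℤ) - N), g ((x : ℤ) - N) := by
  set D := symmDiff (betaSet l N) (betaSet m N) with hD
  have hfilter (P : ℕ → Prop) [DecidablePred P] :
      symmDiff ((betaSet l N).filter P) ((betaSet m N).filter P) = D.filter P := by
    ext x
    simp only [hD, Finset.mem_symmDiff, Finset.mem_filter]
    tauto
  have hlt {x : ℕ} (hx : x ∈ D) : x < 2 * N := by
    rcases Finset.mem_symmDiff.1 hx with hx | hx
    · exact lt_two_mul_of_mem_betaSet hl hlsc hx.1
    · exact lt_two_mul_of_mem_betaSet hm hmsc hx.1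
  have hcast {x : ℕ} (hx : x ∈ D) : ((2 * N - 1 - x : ℕ) : ℤ) - N = -1 - ((x : ℤ) - N) := by
    have := hlt hx
    lia
  rw [armProd_eq_prod_betaSet g hl, armProd_eq_prod_betaSet g hm, prod_mul_prod_eq_prod_symmDiff,
    prod_mul_prod_eq_prod_symmDiff, hfilter, hfilter]
  refine prod_filter_eq_prod_filter_of_involution (ρ := fun x => 2 * N - 1 - x) (fun x hx => ?_)
    (fun x hx => ?_) (fun x hx => ?_) (fun x hx => ?_) fun x hx => ?_
  · have hx2 := hlt hx
    rw [hD, Finset.mem_symmDiff, mem_betaSet_iff_reflect_notMem hl hlsc hx2,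
      mem_betaSet_iff_reflect_notMem hm hmsc hx2] at hx
    rw [hD, Finset.mem_symmDiff]
    tauto
  · have := hlt hx
    lia
  · rw [hcast hx, hg]
  · have := hlt hx
    lia
  · rw [hcast hx, hH]

theorem prod_eq_prod_runnerSet {M : Type*} [CommMonoid M] {p : ℕ} (hp : 0 < p) (A : Finset ℕ)
    (f : ℕ → M) :
    ∏ x ∈ A, f x = ∏ r ∈ Finset.range p, ∏ k ∈ runnerSet p r A, f (p * k + r) := by
  rw [← Finset.prod_fiberwise_of_maps_to (g := (· % p)) (t := Finset.range p)
    fun x _ => Finset.mem_range.2 (Nat.mod_lt x hp)]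
  refine Finset.prod_congr rfl fun r hr => ?_
  rw [Finset.mem_range] at hr
  refine Finset.prod_nbij' (· / p) (p * · + r) (fun x hx => Finset.mem_image_of_mem _ hx)
    (fun k hk => ?_) (fun x hx => ?_) (fun k _ => ?_) fun x hx => ?_
  · exact Finset.mem_filter.2 ⟨(mem_runnerSet hr).1 hk, by simp [Nat.mod_eq_of_lt hr]⟩
  · rw [← (Finset.mem_filter.1 hx).2, Nat.div_add_mod]
  · rw [Nat.mul_add_div hp, Nat.div_eq_of_lt hr, add_zero]
  · rw [← (Finset.mem_filter.1 hx).2, Nat.div_add_mod]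

/-- The fundamental domain of `z ↦ -1 - z` made of whole residue classes modulo `p`, except that
for odd `p` the self-reflected class of `(p - 1) / 2` is cut at `0`. -/
def LowResidue (p : ℕ) (z : ℤ) : Prop :=
  2 * (z % p) + 1 < p ∨ 2 * (z % p) + 1 = p ∧ 0 ≤ z

instance (p : ℕ) : DecidablePred (LowResidue p) := fun z =>
  inferInstanceAs (Decidable (2 * (z % p) + 1 < p ∨ 2 * (z % p) + 1 = p ∧ 0 ≤ z))

theorem lowResidue_neg_one_sub {p : ℕ} (hp : 0 < p) (z : ℤ) :
    LowResidue p (-1 - z) ↔ ¬ LowResidue p z := by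
  have hmod : (-1 - z) % p = p - 1 - z % p := by
    have h0 := Int.emod_nonneg z (b := (p : ℤ)) (by lia)
    have h1 := Int.emod_lt_of_pos z (b := (p : ℤ)) (by lia)
    refine Int.emod_eq_of_lt (a := (p : ℤ) - 1 - z % p) (b := p) (by lia) (by lia) ▸ ?_
    refine Int.ModEq.symm (Int.modEq_iff_dvd.2 ⟨-(z / p) - 1, ?_⟩)
    linear_combination Int.mul_ediv_add_emod z p
  rw [LowResidue, LowResidue, hmod]
  lia

theorem lowResidue_runner_iff {p r : ℕ} (hr : r < p) (k : ℤ) :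
    LowResidue p (p * k + r) ↔ 2 * r + 1 < p ∨ 2 * r + 1 = p ∧ 0 ≤ k := by
  have hmod : ((p : ℤ) * k + r) % p = r := by
    rw [Int.mul_add_emod_self_left, Int.emod_eq_of_lt (by lia) (by lia)]
  have hnonneg : 0 ≤ (p : ℤ) * k + r ↔ 0 ≤ k := by
    constructor <;> intro h
    · by_contra hk
      have : (p : ℤ) * (k + 1) ≤ 0 := mul_nonpos_of_nonneg_of_nonpos (by lia) (by lia)
      lia
    · have : 0 ≤ (p : ℤ) * k := mul_nonneg (by lia) h
      lia
  rw [LowResidue, hmod, hnonneg]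
  lia

theorem eq_of_padBeta_eq_of_card_eq {S T : Finset ℕ} {d e : ℕ} (h : padBeta S d = padBeta T e)
    (hcard : S.card = T.card) : S = T := by
  obtain rfl : d = e := by
    have := card_padBeta S d
    rw [h, card_padBeta] at this
    lia
  ext x
  have hx : x + d ∈ padBeta S d ↔ x + d ∈ padBeta T d := by rw [h]
  simpa [padBeta] using hx

section Multiplicativity

variable {p : ℕ} {g : ℤ → ℤˣ} {ε : ℤˣ} (hg : ∀ b, ¬ (p : ℤ) ∣ 2 * b + 1 → g (b + p) = ε * g b)
  {l κ μ : YoungDiagram} {K : ℕ} (hl : l.colLen 0 ≤ p * K) (hμK : μ.colLen 0 ≤ p * K)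
  (hsc : l.transpose = l) (hκ : IsPCoreOf p l κ) (hμ : HasEmptyPCore p μ) {r : ℕ} (hr : r < p)
include hl hμK hκ hμ hr

include hg in
theorem prod_lowRunner_mul_prod (hlow : 2 * r + 1 < p) {d e : ℕ}
    (hpad : padBeta (runnerSet p r (betaSet l (p * K))) d =
      padBeta (runnerSet p r (betaSet μ (p * K))) e) :
    (∏ k ∈ runnerSet p r (betaSet l (p * K)), g (p * ((k : ℤ) - K) + r)) *
        ∏ k ∈ runnerSet p r (betaSet μ (p * K)), g (p * ((k : ℤ) - K) + r) =
      (∏ k ∈ runnerSet p r (betaSet κ (p * K)), g (p * ((k : ℤ) - K) + r)) *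
        ∏ k ∈ runnerSet p r (betaSet ⊥ (p * K)), g (p * ((k : ℤ) - K) + r) := by
  have hstep (k : ℕ) :
      g (p * (((k + 1 : ℕ) : ℤ) - K) + r) = ε * g (p * ((k : ℤ) - K) + r) := by
    rw [← hg]
    · congr 1
      push_cast
      ring
    · rw [show 2 * ((p : ℤ) * (k - K) + r) + 1 = p * (2 * (k - K)) + (2 * r + 1 : ℕ) by
        push_cast; ring, Int.dvd_add_right (Dvd.intro _ rfl), Int.natCast_dvd_natCast]
      exact Nat.not_dvd_of_pos_of_lt (by lia) hlow
  have hκK := (colLen_le_of_reflTransGen hκ.1 0).trans hl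
  have hκr := runnerCount_eq_of_reflTransGen (by lia) hl hκ.1 r
  have hμr := hμ.runnerCount_eq hμK hr
  rw [prod_mul_prod_eq_of_padBeta_eq hstep hpad, hκ.2.runnerSet_eq hκK hr, hκr,
    runnerSet_betaSet_bot hr]
  rw [runnerCount] at hμr ⊢
  rw [hμr]

include hsc in
theorem runnerSet_eq_of_middle (hmid : 2 * r + 1 = p) {d e : ℕ}
    (hpad : padBeta (runnerSet p r (betaSet l (p * K))) d =
      padBeta (runnerSet p r (betaSet μ (p * K))) e) :
    runnerSet p r (betaSet l (p * K)) = runnerSet p r (betaSet μ (p * K)) ∧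
      runnerSet p r (betaSet κ (p * K)) = runnerSet p r (betaSet ⊥ (p * K)) := by
  have hcount : runnerCount p K r l = K := by
    have := runnerCount_add_runnerCount hl hsc hr
    rw [show p - 1 - r = r by lia] at this
    lia
  have hκK := (colLen_le_of_reflTransGen hκ.1 0).trans hl
  refine ⟨eq_of_padBeta_eq_of_card_eq hpad (hcount.trans (hμ.runnerCount_eq hμK hr).symm), ?_⟩
  rw [hκ.2.runnerSet_eq hκK hr, runnerSet_betaSet_bot hr,
    runnerCount_eq_of_reflTransGen (by lia) hl hκ.1, hcount]

end Multiplicativity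

/-- The pairs `(l, μ)` and `(κ, ∅)` are compared runner by runner over `LowResidue p`: a runner
below the middle contributes a product depending only on its bead counts, and on the middle runner
the two members of each pair agree and their products cancel. -/
theorem armProd_eq_mul {p : ℕ} (hp : 0 < p) {g : ℤ → ℤˣ} {ε : ℤˣ} (hrefl : ∀ b, g (-1 - b) = g b)
    (hshift : ∀ b, ¬ (p : ℤ) ∣ 2 * b + 1 → g (b + p) = ε * g b) {l κ μ : YoungDiagram}
    (hsc : l.transpose = l) (hκ : IsPCoreOf p l κ) (hμ : IsPCocoreOf p l μ) :
    armProd g l = armProd g κ * armProd g μ := by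
  have hκsc := hκ.transpose_eq_self hp hsc
  have hμsc := hμ.transpose_eq_self hp hsc
  obtain ⟨hempty, N, hl, hμN, ⟨K, rfl⟩, hpad⟩ := hμ
  have hκN := (colLen_le_of_reflTransGen hκ.1 0).trans hl
  have hbotN : (⊥ : YoungDiagram).colLen 0 ≤ p * K := by simp [colLen_bot]
  have hH := lowResidue_neg_one_sub hp
  suffices h : armProd g l * armProd g μ = armProd g κ * armProd g ⊥ by
    rw [armProd_bot, mul_one] at h
    rw [← h, mul_assoc, Int.units_mul_self, mul_one]
  rw [armProd_mul_armProd hrefl hl hμN hsc hμsc hH,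
    armProd_mul_armProd hrefl hκN hbotN hκsc transpose_bot hH]
  simp only [Finset.prod_filter]
  rw [prod_eq_prod_runnerSet hp (betaSet l _), prod_eq_prod_runnerSet hp (betaSet μ _),
    prod_eq_prod_runnerSet hp (betaSet κ _), prod_eq_prod_runnerSet hp (betaSet ⊥ _),
    ← Finset.prod_mul_distrib, ← Finset.prod_mul_distrib]
  refine Finset.prod_congr rfl fun r hr => ?_
  rw [Finset.mem_range] at hr
  obtain ⟨d, e, hde⟩ := hpad r hr
  have hcast (k : ℕ) : ((p * k + r : ℕ) : ℤ) - (p * K : ℕ) = p * ((k : ℤ) - K) + r := by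
    push_cast
    ring
  simp only [hcast, lowResidue_runner_iff hr]
  rcases lt_trichotomy (2 * r + 1) p with hlow | hmid | hhigh
  · simpa only [hlow, true_or, if_true] using
      prod_lowRunner_mul_prod hshift hl hμN hκ hempty hr hlow hde
  · obtain ⟨hlμ, hκbot⟩ := runnerSet_eq_of_middle hl hμN hsc hκ hempty hr hmid hde
    rw [hlμ, hκbot, Int.units_mul_self, Int.units_mul_self]
  · simp [hhigh.not_gt, hhigh.ne']

/-! ### Action on square roots -/

section SqrtSign

variable {F : Type*} [Field F] {σ : F →+* F} {D E s t : ℤ}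

/-- `σ` multiplies the square roots of `D` in `F` by `s`; for `D ≠ 0` in an algebraically closed
field of characteristic zero, this determines `s`, which is then `1` or `-1`. -/
def IsSqrtSign (σ : F →+* F) (D s : ℤ) : Prop :=
  ∀ α : F, α ^ 2 = D → σ α = s * α

theorem IsSqrtSign.of_map_eq {α : F} (hα : α ^ 2 = D) (hσα : σ α = s * α) :
    IsSqrtSign σ D s := by
  intro β hβ
  rcases sq_eq_sq_iff_eq_or_eq_neg.1 (hβ.trans hα.symm) with rfl | rfl
  · exact hσα
  · rw [map_neg, hσα, mul_neg]

theorem isSqrtSign_one (σ : F →+* F) : IsSqrtSign σ 1 1 :=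
  .of_map_eq (α := 1) (by simp) (by simp)

variable [IsAlgClosed F]

theorem exists_sq_eq_intCast (F : Type*) [Field F] [IsAlgClosed F] (D : ℤ) :
    ∃ α : F, α ^ 2 = D :=
  IsAlgClosed.exists_pow_nat_eq _ two_pos

theorem exists_isSqrtSign (σ : F →+* F) (D : ℤ) : ∃ s : ℤˣ, IsSqrtSign σ D s := by
  obtain ⟨α, hα⟩ := exists_sq_eq_intCast F D
  have hσα : σ α ^ 2 = α ^ 2 := by rw [← map_pow, hα, map_intCast]
  rcases sq_eq_sq_iff_eq_or_eq_neg.1 hσα with h | h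
  · exact ⟨1, .of_map_eq hα (by simpa using h)⟩
  · exact ⟨-1, .of_map_eq hα (by simpa using h)⟩

theorem IsSqrtSign.mul (hD : IsSqrtSign σ D s) (hE : IsSqrtSign σ E t) :
    IsSqrtSign σ (D * E) (s * t) := by
  obtain ⟨α, hα⟩ := exists_sq_eq_intCast F D
  obtain ⟨β, hβ⟩ := exists_sq_eq_intCast F E
  refine .of_map_eq (α := α * β) (by rw [mul_pow, hα, hβ, Int.cast_mul]) ?_
  rw [map_mul, hD α hα, hE β hβ, Int.cast_mul, mul_mul_mul_comm]

theorem isSqrtSign_prod {ι : Type*} (S : Finset ι) {D : ι → ℤ} {s : ι → ℤˣ}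
    (h : ∀ i ∈ S, IsSqrtSign σ (D i) (s i)) :
    IsSqrtSign σ (∏ i ∈ S, D i) ((∏ i ∈ S, s i : ℤˣ) : ℤ) := by
  have hprod := Finset.prod_induction (fun i => (D i, (s i : ℤ))) (fun x => IsSqrtSign σ x.1 x.2)
    (fun _ _ => .mul) (isSqrtSign_one σ) h
  rwa [Prod.fst_prod, Prod.snd_prod, ← Units.coe_prod] at hprod

theorem IsSqrtSign.unique [CharZero F] (hD : D ≠ 0) (hs : IsSqrtSign σ D s)
    (ht : IsSqrtSign σ D t) : s = t := by
  obtain ⟨α, hα⟩ := exists_sq_eq_intCast F D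
  have hα0 : α ≠ 0 := by
    rintro rfl
    exact hD (Int.cast_eq_zero.1 (hα.symm.trans (zero_pow two_ne_zero)))
  exact Int.cast_injective (mul_right_cancel₀ hα0 ((hs α hα).symm.trans (ht α hα)))

end SqrtSign

/-! ### Gauss sums and reciprocity -/

section GaussSum

open NumberTheorySymbols

variable {F : Type*} [Field F] [IsAlgClosed F] [CharZero F] {σ : F →+* F} {e : ℕ}

theorem isSqrtSign_legendreSym {q : ℕ} [Fact q.Prime] (hq : q ≠ 2)
    (hσ : ∀ ζ : F, ζ ^ q = 1 → σ ζ = ζ ^ e) (he : e.Coprime q) :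
    IsSqrtSign σ (legendreSym q (-1) * q) (legendreSym q e) := by
  have : NeZero (q : F) := ⟨Nat.cast_ne_zero.2 (NeZero.ne q)⟩
  obtain ⟨ζ, hζ⟩ := HasEnoughRootsOfUnity.exists_primitiveRoot F q
  let χ : MulChar (ZMod q) F := (quadraticChar (ZMod q)).ringHomComp (Int.castRingHom F)
  let ψ : AddChar (ZMod q) F := AddChar.zmodChar q hζ.pow_eq_one
  let u : (ZMod q)ˣ := ZMod.unitOfCoprime e he
  have hψ : ψ.IsPrimitive := AddChar.zmodChar_primitive_of_primitive_root q hζ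
  have hquad : χ.IsQuadratic := (quadraticChar_isQuadratic (ZMod q)).comp _
  have hχ : χ ≠ 1 := (MulChar.ringHomComp_ne_one_iff (RingHom.injective_int _)).2 <|
    quadraticChar_ne_one (by rwa [ZMod.ringChar_zmod_n])
  have hχval (a : ZMod q) : χ a = ((quadraticChar (ZMod q) a : ℤ) : F) := rfl
  have hψσ (a : ZMod q) : σ (ψ a) = ψ (u * a) := by
    rw [hσ, ← AddChar.map_nsmul_eq_pow, nsmul_eq_mul, ZMod.coe_unitOfCoprime]
    rw [← AddChar.map_nsmul_eq_pow, nsmul_eq_mul, CharP.cast_eq_zero, zero_mul,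
      AddChar.map_zero_eq_one]
  have hgauss : σ (gaussSum χ ψ) = gaussSum χ (ψ.mulShift u) := by
    simp only [gaussSum, map_sum, map_mul, hχval, map_intCast, hψσ, AddChar.mulShift_apply]
  refine .of_map_eq (α := gaussSum χ ψ) ?_ ?_
  · rw [gaussSum_sq hχ hquad hψ, hχval, ZMod.card]
    simp [legendreSym]
  · rw [hgauss, gaussSum_mulShift_eq, hquad.inv, hχval, ZMod.coe_unitOfCoprime]
    simp [legendreSym]

theorem isSqrtSign_jacobiSym {n : ℕ} (hn : Odd n) (he : e.Coprime n)
    (hσ : ∀ ζ : F, ζ ^ n = 1 → σ ζ = ζ ^ e) : IsSqrtSign σ (ZMod.χ₄ n * n) J(e | n) := by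
  induction n using induction_on_primes with
  | zero => simp at hn
  | one => simpa using isSqrtSign_one σ
  | prime_mul q n hq ih =>
    have : Fact q.Prime := ⟨hq⟩
    obtain ⟨hqodd, hnodd⟩ := Nat.odd_mul.1 hn
    obtain ⟨hqe, hne⟩ := Nat.coprime_mul_iff_right.1 he
    have hq2 : q ≠ 2 := by
      rintro rfl
      exact absurd hqodd (by decide)
    have hsignq := isSqrtSign_legendreSym hq2 (fun ζ hζ => hσ ζ (by rw [pow_mul, hζ, one_pow])) hqe
    have hsignn := ih hnodd hne fun ζ hζ => hσ ζ (by rw [mul_comm, pow_mul, hζ, one_pow])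
    have : NeZero n := ⟨hnodd.pos.ne'⟩
    rw [legendreSym.at_neg_one hq2, jacobiSym.legendreSym.to_jacobiSym] at hsignq
    rw [jacobiSym.mul_right, Nat.cast_mul, Nat.cast_mul, map_mul, mul_mul_mul_comm]
    exact hsignq.mul hsignn

theorem chiFour_natAbs_mul_natAbs {D : ℤ} (hD : D % 4 = 1) :
    ZMod.χ₄ D.natAbs * D.natAbs = D := by
  rcases Int.natAbs_eq D with h | h
  · rw [ZMod.χ₄_nat_one_mod_four (by lia), one_mul, ← h]
  · rw [ZMod.χ₄_nat_three_mod_four (by lia), neg_one_mul, ← h]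

theorem isSqrtSign_jacobiSym_natAbs {D : ℤ} (hD : D % 4 = 1) (he : e.Coprime D.natAbs)
    (hσ : ∀ ζ : F, ζ ^ D.natAbs = 1 → σ ζ = ζ ^ e) : IsSqrtSign σ D J(e | D.natAbs) := by
  have h := isSqrtSign_jacobiSym (Nat.odd_iff.2 (by lia)) he hσ
  rwa [chiFour_natAbs_mul_natAbs hD] at h

theorem jacobiSym_natAbs_eq_of_odd {n : ℕ} (hn : Odd n) {D : ℤ} (hD : D % 4 = 1) :
    J(n | D.natAbs) = J(D | n) := by
  rcases Int.natAbs_eq D with h | h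
  · rw [jacobiSym.quadratic_reciprocity_one_mod_four' hn (by lia), ← h]
  · conv_rhs => rw [h, jacobiSym.neg _ hn]
    rcases Nat.odd_mod_four_iff.1 (Nat.odd_iff.1 hn) with hn4 | hn4
    · rw [ZMod.χ₄_nat_one_mod_four hn4, one_mul,
        jacobiSym.quadratic_reciprocity_one_mod_four hn4 (Nat.odd_iff.2 (by lia))]
    · rw [ZMod.χ₄_nat_three_mod_four hn4, neg_one_mul,
        jacobiSym.quadratic_reciprocity_three_mod_four hn4 (by lia)]

end GaussSum

/-! ### Signed hook lengths -/

/-- The hook length `2 * b + 1`, of a diagonal hook with arm length `b`, with the sign making it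
congruent to `1` modulo `4`. -/
def signedHook (b : ℤ) : ℤ := b.negOnePow * (2 * b + 1)

theorem signedHook_eq_or (b : ℤ) :
    b % 2 = 0 ∧ signedHook b = 2 * b + 1 ∨ b % 2 = 1 ∧ signedHook b = -(2 * b + 1) := by
  rcases Int.even_or_odd b with h | h
  · exact .inl ⟨Int.even_iff.1 h, by simp [signedHook, Int.negOnePow_even b h]⟩
  · exact .inr ⟨Int.odd_iff.1 h, by simp [signedHook, Int.negOnePow_odd b h]⟩

theorem signedHook_emod_four (b : ℤ) : signedHook b % 4 = 1 := by
  have := signedHook_eq_or b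
  lia

theorem natAbs_signedHook (b : ℤ) : (signedHook b).natAbs = (2 * b + 1).natAbs := by
  have := signedHook_eq_or b
  lia

theorem signedHook_neg_one_sub (b : ℤ) : signedHook (-1 - b) = signedHook b := by
  have := signedHook_eq_or b
  have := signedHook_eq_or (-1 - b)
  lia

theorem card_filter_fst_lt_snd (l : YoungDiagram) :
    (l.cells.filter fun c => c.1 < c.2).card =
      ∑ c ∈ l.cells.filter (fun c => c.1 = c.2), (l.rowLen c.1 - c.1 - 1) := by
  rw [Finset.card_eq_sum_card_fiberwise (f := fun c => (c.1, c.1))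
    (t := l.cells.filter fun c => c.1 = c.2)]
  · refine Finset.sum_congr rfl fun c hc => ?_
    have hfiber : ((l.cells.filter fun c => c.1 < c.2).filter fun a => (a.1, a.1) = c) =
        (Finset.Ioo c.1 (l.rowLen c.1)).image (Prod.mk c.1) := by
      have hc := (Finset.mem_filter.1 hc).2
      ext ⟨i, j⟩
      simp only [Finset.mem_filter, Finset.mem_image, Finset.mem_Ioo, YoungDiagram.mem_cells,
        YoungDiagram.mem_iff_lt_rowLen, Prod.ext_iff]
      constructor
      · rintro ⟨⟨hj, hij⟩, rfl, -⟩
        exact ⟨j, ⟨hij, hj⟩, rfl, rfl⟩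
      · rintro ⟨j, ⟨hij, hj⟩, rfl, rfl⟩
        exact ⟨⟨hj, hij⟩, rfl, hc⟩
    rw [hfiber, Finset.card_image_of_injective _ (Prod.mk_right_injective _), Nat.card_Ioo]
  · intro c hc
    simp only [Finset.coe_filter, Set.mem_ofPred_eq, YoungDiagram.mem_cells, and_true] at hc ⊢
    exact l.up_left_mem le_rfl hc.2.le hc.1

theorem card_cells_of_transpose_eq_self {l : YoungDiagram} (hsc : l.transpose = l) :
    l.cells.card = durfee l +
      2 * ∑ c ∈ l.cells.filter (fun c => c.1 = c.2), (l.rowLen c.1 - c.1 - 1) := by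
  have hswap : (l.cells.filter fun c => c.2 < c.1).card =
      (l.cells.filter fun c => c.1 < c.2).card := by
    refine Finset.card_nbij' Prod.swap Prod.swap ?_ ?_ (fun _ _ => rfl) (fun _ _ => rfl) <;>
    · rintro ⟨i, j⟩ h
      simp only [Finset.coe_filter, YoungDiagram.mem_cells, Set.mem_ofPred_eq,
        Prod.swap_prod_mk] at h ⊢
      rwa [← hsc, YoungDiagram.mem_transpose, Prod.swap_prod_mk]
  have hsplit : l.cells.card = durfee l + ((l.cells.filter fun c => c.1 < c.2).card +
      (l.cells.filter fun c => c.2 < c.1).card) := by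
    simp only [durfee, Finset.card_filter, ← Finset.sum_add_distrib]
    rw [Finset.card_eq_sum_ones]
    exact Finset.sum_congr rfl fun c _ => by grind
  rw [hsplit, hswap, card_filter_fst_lt_snd, two_mul]

theorem selfConjDisc_eq_armProd {l : YoungDiagram} (hsc : l.transpose = l) :
    selfConjDisc l = armProd signedHook l := by
  have hcol (i : ℕ) : l.colLen i = l.rowLen i := by
    conv_rhs => rw [← hsc, YoungDiagram.rowLen_transpose]
  rw [selfConjDisc, card_cells_of_transpose_eq_self hsc, Nat.add_sub_cancel_left,
    Nat.mul_div_cancel_left _ two_pos, diagHookProd, armProd, ← Finset.prod_pow_eq_pow_sum,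
    ← Finset.prod_mul_distrib]
  refine Finset.prod_congr rfl fun c hc => ?_
  obtain ⟨⟨i, j⟩, rfl⟩ : ∃ d, d = c := ⟨c, rfl⟩
  obtain ⟨hc, hij : i = j⟩ := Finset.mem_filter.1 hc
  subst hij
  obtain ⟨a, ha⟩ := Nat.exists_eq_add_of_lt (YoungDiagram.mem_iff_lt_rowLen.1 hc)
  simp only [hcol, ha]
  rw [show ((i + a + 1 : ℕ) : ℤ) - i - 1 = a by lia, signedHook, Int.coe_negOnePow_natCast,
    show i + a + 1 - i - 1 = a by lia, show i + a + 1 + (i + a + 1) - 2 * i - 1 = 2 * a + 1 by lia]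
  push_cast
  rfl

section HookShift

open NumberTheorySymbols

theorem jacobiSym_hook_add_of_odd {p : ℕ} (hp : Odd p) (b : ℤ) :
    J(p | (2 * (b + p) + 1).natAbs) = (-1) ^ (p / 2) * J(p | (2 * b + 1).natAbs) := by
  have hp2 := Nat.odd_iff.1 hp
  have hmod : signedHook (b + p) % p = -signedHook b % p := by
    refine Int.ModEq.symm (Int.modEq_iff_dvd.2 ⟨2 * (b + p).negOnePow, ?_⟩)
    rw [signedHook, signedHook, Int.negOnePow_add, Int.negOnePow_odd p (by exact_mod_cast hp)]
    push_cast
    ring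
  rw [← natAbs_signedHook, ← natAbs_signedHook,
    jacobiSym_natAbs_eq_of_odd hp (signedHook_emod_four _),
    jacobiSym_natAbs_eq_of_odd hp (signedHook_emod_four _), jacobiSym.mod_left' hmod,
    jacobiSym.neg _ hp, ZMod.χ₄_eq_neg_one_pow hp2]

theorem jacobiSym_two_hook_add (b : ℤ) :
    J(2 | (2 * (b + 2) + 1).natAbs) = -J(2 | (2 * b + 1).natAbs) := by
  rw [jacobiSym.at_two (Nat.odd_iff.2 (by lia)), jacobiSym.at_two (Nat.odd_iff.2 (by lia)),
    ZMod.χ₈_nat_eq_if_mod_eight, ZMod.χ₈_nat_eq_if_mod_eight]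
  split_ifs <;> lia

theorem exists_jacobiSym_hook_add {p : ℕ} (hp : p.Prime) (k : ℕ) :
    ∃ ε : ℤˣ, ∀ b : ℤ, J((p ^ k : ℕ) | (2 * (b + p) + 1).natAbs) =
      ε * J((p ^ k : ℕ) | (2 * b + 1).natAbs) := by
  obtain ⟨η, hη⟩ : ∃ η : ℤˣ, ∀ b : ℤ,
      J(p | (2 * (b + p) + 1).natAbs) = η * J(p | (2 * b + 1).natAbs) := by
    rcases hp.eq_two_or_odd' with rfl | hodd
    · exact ⟨-1, fun b => by simpa using jacobiSym_two_hook_add b⟩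
    · exact ⟨(-1) ^ (p / 2), fun b => by simpa using jacobiSym_hook_add_of_odd hodd b⟩
  refine ⟨η ^ k, fun b => ?_⟩
  rw [Nat.cast_pow, jacobiSym.pow_left, jacobiSym.pow_left, hη, mul_pow, Units.val_pow_eq_pow_val]

end HookShift

/-! ### The sign of the discriminant -/

section Littlewood

open NumberTheorySymbols

variable {F : Type*} [Field F] [IsAlgClosed F] [CharZero F] {σ : F →+* F} {p k : ℕ}

theorem exists_sqrtSign_hook (hp : p.Prime)
    (hσ : ∀ (ζ : F) (n : ℕ), 0 < n → n.Coprime p → ζ ^ n = 1 → σ ζ = ζ ^ p ^ k) :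
    ∃ (g : ℤ → ℤˣ) (ε : ℤˣ), (∀ b, IsSqrtSign σ (signedHook b) (g b)) ∧
      (∀ b, g (-1 - b) = g b) ∧ ∀ b, ¬ (p : ℤ) ∣ 2 * b + 1 → g (b + p) = ε * g b := by
  choose s hs using exists_isSqrtSign σ
  obtain ⟨ε, hε⟩ := exists_jacobiSym_hook_add hp k
  have hjacobi (b : ℤ) (hb : ¬ (p : ℤ) ∣ 2 * b + 1) :
      (s (signedHook b) : ℤ) = J((p ^ k : ℕ) | (2 * b + 1).natAbs) := by
    have hmod := signedHook_emod_four b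
    have hcop : p.Coprime (signedHook b).natAbs := by
      rwa [hp.coprime_iff_not_dvd, natAbs_signedHook, ← Int.natCast_dvd]
    rw [← natAbs_signedHook]
    exact (hs _).unique (by lia) <| isSqrtSign_jacobiSym_natAbs hmod (hcop.pow_left k)
      fun ζ hζ => hσ ζ _ (by lia) hcop.symm hζ
  refine ⟨fun b => s (signedHook b), ε, fun b => hs _,
    fun b => congrArg s (signedHook_neg_one_sub b), fun b hb => Units.ext ?_⟩
  have hb' : ¬ (p : ℤ) ∣ 2 * (b + p) + 1 := by
    rwa [show 2 * (b + p) + 1 = (2 * b + 1) + p * 2 by ring, dvd_add_left (dvd_mul_right _ _)]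
  rw [Units.val_mul, hjacobi b hb, hjacobi _ hb', hε]

theorem tau_selfConj_littlewood_general (hp : p.Prime)
    (hσ : ∀ (ζ : F) (n : ℕ), 0 < n → n.Coprime p → ζ ^ n = 1 → σ ζ = ζ ^ p ^ k)
    {l κ μ : YoungDiagram} (hsc : l.transpose = l) (hκ : IsPCoreOf p l κ)
    (hμ : IsPCocoreOf p l μ) {τl τκ τμ : ℤ} (hτl : IsSqrtSign σ (selfConjDisc l) τl)
    (hτκ : IsSqrtSign σ (selfConjDisc κ) τκ) (hτμ : IsSqrtSign σ (selfConjDisc μ) τμ) :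
    τl = τκ * τμ := by
  obtain ⟨g, ε, hg, hrefl, hshift⟩ := exists_sqrtSign_hook hp hσ
  have hsign {m : YoungDiagram} (hm : m.transpose = m) {τ : ℤ}
      (hτ : IsSqrtSign σ (selfConjDisc m) τ) : τ = armProd g m := by
    rw [selfConjDisc_eq_armProd hm] at hτ
    refine hτ.unique (Finset.prod_ne_zero_iff.2 fun c _ hc => ?_)
      (isSqrtSign_prod _ fun c _ => hg _)
    have := signedHook_emod_four ((m.rowLen c.1 : ℤ) - c.1 - 1)
    lia
  rw [hsign hsc hτl, hsign (hκ.transpose_eq_self hp.pos hsc) hτκ,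
    hsign (hμ.transpose_eq_self hp.pos hsc) hτμ, armProd_eq_mul hp.pos hrefl hshift hsc hκ hμ,
    Units.val_mul]

end Littlewood

/-- Let `p` be an odd prime, `λ` a self-conjugate partition with `p`-core
`κ` and `p`-cocore `μ`, and `σ` an automorphism of `ℚ̄` over `ℚ` that either is of
`σ_p`-type or fixes every root of unity of order coprime to `p`. Then
`τ(λ,σ) = τ(κ,σ)·τ(μ,σ)`. -/
theorem tau_selfConj_littlewood (p : ℕ) (hp : p.Prime) (hpodd : Odd p)
    (l κ μ : YoungDiagram) (hsc : l.transpose = l)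
    (hκ : IsPCoreOf p l κ) (hμ : IsPCocoreOf p l μ)
    (σ : Qbar ≃ₐ[ℚ] Qbar)
    (hσ : IsSigmaPType p σ ∨
      (∀ (ζ : Qbar) (n : ℕ), 0 < n → Nat.Coprime n p → ζ ^ n = 1 → σ ζ = ζ))
    (τl τκ τμ : ℤ)
    (hτl : ∀ α : Qbar, α ^ 2 = (selfConjDisc l : Qbar) → σ α = (τl : Qbar) * α)
    (hτκ : ∀ α : Qbar, α ^ 2 = (selfConjDisc κ : Qbar) → σ α = (τκ : Qbar) * α)
    (hτμ : ∀ α : Qbar, α ^ 2 = (selfConjDisc μ : Qbar) → σ α = (τμ : Qbar) * α) :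
    τl = τκ * τμ := by
  obtain ⟨k, hk⟩ : ∃ k, ∀ (ζ : Qbar) (n : ℕ), 0 < n → n.Coprime p → ζ ^ n = 1 →
      σ ζ = ζ ^ p ^ k :=
    hσ.elim (fun h => ⟨1, by simpa using h.1⟩) fun h => ⟨0, by simpa using h⟩
  exact tau_selfConj_littlewood_general (σ := (σ : Qbar →+* Qbar)) hp hk hsc hκ hμ hτl hτκ hτμ
end
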